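/- Let ABC be a triangle with side lengths a < b < c. Then every minimum area isosceles container for ABC equals (as a convex set) one of the three triangles AB'C, ABC', AB₁C. In particular, ABC has at most 3 distinct minimum area isosceles containers, and every minimum area isosceles container is a special container of the first or the second kind. -/

import Mathlib

open EuclideanGeometry MeasureTheory Real

noncomputable section

/-- The Euclidean plane. -/
abbrev Pt : Type := EuclideanSpace ℝ (Fin 2)

/-- The closed triangular region with vertices `A`, `B`, `C`
(the convex hull of the three vertices). -/
def tri (A B C : Pt) : Set Pt := convexHull ℝ {A, B, C}

/-- The area of the triangle `A B C`:
the 2-dimensional Lebesgue measure of its convex hull. -/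
def triArea (A B C : Pt) : ℝ := (volume (tri A B C)).toReal

/-- A triangle is isosceles if at least two of its side lengths coincide. -/
def IsIsosceles (A B C : Pt) : Prop :=
  dist B C = dist C A ∨ dist C A = dist A B ∨ dist A B = dist B C

/-- `S P R` is an isosceles container for the triangle `A B C`:
it is a genuine isosceles triangle whose convex hull contains that of `A B C`. -/
def IsIsoscelesContainer (A B C S P R : Pt) : Prop :=
  AffineIndependent ℝ ![S, P, R] ∧ IsIsosceles S P R ∧ tri A B C ⊆ tri S P R

/-- `S P R` is a minimum area isosceles container for the triangle `A B C`. -/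
def IsMinIsoscelesContainer (A B C S P R : Pt) : Prop :=
  IsIsoscelesContainer A B C S P R ∧
    ∀ S' P' R' : Pt, IsIsoscelesContainer A B C S' P' R' →
      triArea S P R ≤ triArea S' P' R'

/-- `Z` lies on the ray starting at `X` passing through `Y`. -/
def OnRay (X Y Z : Pt) : Prop := SameRay ℝ (Y - X) (Z - X)

/-- The cross product of two plane vectors. -/
def cross (u w : ℂ) : ℝ := u.re * w.im - u.im * w.re

/-- Twice the signed area of the triangle `a b c`. -/
def signedArea (a b c : ℂ) : ℝ := cross (b - a) (c - a)

/-- The positively oriented triangle `S P R` is isosceles with apex `S` and contains the points of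
the family `T`. -/
structure Encloses (S P R : ℂ) (T : Fin 3 → ℂ) : Prop where
  pos : 0 < signedArea S P R
  iso : Complex.normSq (P - S) = Complex.normSq (R - S)
  left : ∀ i, 0 ≤ signedArea S P (T i)
  base : ∀ i, 0 ≤ signedArea P R (T i)
  right : ∀ i, 0 ≤ signedArea R S (T i)

/-- `S P R` has minimum area among the isosceles triangles enclosing `T`. -/
def Optimal (S P R : ℂ) (T : Fin 3 → ℂ) : Prop :=
  Encloses S P R T ∧ ∀ S' P' R', Encloses S' P' R' T → signedArea S P R ≤ signedArea S' P' R'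

/-- The triangle `S P R` shares a side and an adjacent angle with the triangle `T`. -/
def SharesSideAndAngle {E : Type*} [AddCommGroup E] [Module ℝ E] (S P R : E) (T : Fin 3 → E) :
    Prop :=
  ∃ i j k : Fin 3, i ≠ j ∧ i ≠ k ∧ j ≠ k ∧ ∃ r : ℝ, 1 ≤ r ∧
    ({S, P, R} : Set E) = {T i, T j, T i + r • (T k - T i)}

/-- The triangle `T` is not degenerate. -/
def Nondegenerate (T : Fin 3 → ℂ) : Prop :=
  ∀ i j k : Fin 3, i ≠ j → i ≠ k → j ≠ k → signedArea (T i) (T j) (T k) ≠ 0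

lemma signedArea_similarity (w v a b c : ℂ) :
    signedArea (w * a + v) (w * b + v) (w * c + v) = Complex.normSq w * signedArea a b c := by
  simp [signedArea, cross, Complex.normSq_apply]; ring

lemma signedArea_add (a b z u : ℂ) :
    signedArea a b (z + u) = signedArea a b z + cross (b - a) u := by
  simp [signedArea, cross]; ring

lemma cross_smul (u w : ℂ) (t : ℝ) : cross u (t * w) = t * cross u w := by
  simp [cross]; ring

lemma Encloses.similarity {S P R : ℂ} {T : Fin 3 → ℂ} (h : Encloses S P R T) {w : ℂ}
    (hw : w ≠ 0) (v : ℂ) :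
    Encloses (w * S + v) (w * P + v) (w * R + v) (fun i => w * T i + v) := by
  have hn : 0 < Complex.normSq w := Complex.normSq_pos.2 hw
  refine ⟨?_, ?_, fun i => ?_, fun i => ?_, fun i => ?_⟩
  · rw [signedArea_similarity]; exact mul_pos hn h.pos
  · have e : ∀ x y : ℂ, w * x + v - (w * y + v) = w * (x - y) := by intros; ring
    rw [e, e, Complex.normSq_mul, Complex.normSq_mul, h.iso]
  · rw [signedArea_similarity]; exact mul_nonneg hn.le (h.left i)
  · rw [signedArea_similarity]; exact mul_nonneg hn.le (h.base i)
  · rw [signedArea_similarity]; exact mul_nonneg hn.le (h.right i)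

lemma Optimal.similarity {S P R : ℂ} {T : Fin 3 → ℂ} (h : Optimal S P R T) {w : ℂ}
    (hw : w ≠ 0) (v : ℂ) :
    Optimal (w * S + v) (w * P + v) (w * R + v) (fun i => w * T i + v) := by
  refine ⟨h.1.similarity hw v, fun S' P' R' h' => ?_⟩
  have h2 := h'.similarity (inv_ne_zero hw) (-(w⁻¹ * v))
  have e : (fun i => w⁻¹ * (w * T i + v) + -(w⁻¹ * v)) = T := by
    funext i; field_simp; ring
  rw [e] at h2
  have h3 := h.2 _ _ _ h2
  have hn : 0 < Complex.normSq w := Complex.normSq_pos.2 hw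
  rw [signedArea_similarity, Complex.normSq_inv] at h3
  rw [signedArea_similarity]
  rwa [le_inv_mul_iff₀ hn] at h3

lemma signedArea_conj (a b c : ℂ) :
    signedArea (starRingEnd ℂ a) (starRingEnd ℂ b) (starRingEnd ℂ c) = -signedArea a b c := by
  simp [signedArea, cross]; ring

lemma signedArea_swap (a b c : ℂ) : signedArea b a c = -signedArea a b c := by
  simp [signedArea, cross]; ring

lemma signedArea_rotate (a b c : ℂ) : signedArea b c a = signedArea a b c := by
  simp [signedArea, cross]; ring

lemma signedArea_swap_right (a b c : ℂ) : signedArea a c b = -signedArea a b c := by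
  simp [signedArea, cross]; ring

lemma Encloses.conj {S P R : ℂ} {T : Fin 3 → ℂ} (h : Encloses S P R T) :
    Encloses (starRingEnd ℂ S) (starRingEnd ℂ R) (starRingEnd ℂ P)
      (fun i => starRingEnd ℂ (T i)) := by
  refine ⟨?_, ?_, fun i => ?_, fun i => ?_, fun i => ?_⟩
  · rw [signedArea_conj, signedArea_swap_right, neg_neg]; exact h.pos
  · rw [← map_sub, ← map_sub, Complex.normSq_conj, Complex.normSq_conj, h.iso]
  · rw [signedArea_conj, signedArea_swap, neg_neg]; exact h.right i
  · rw [signedArea_conj, signedArea_swap, neg_neg]; exact h.base i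
  · rw [signedArea_conj, signedArea_swap, neg_neg]; exact h.left i

lemma Optimal.conj {S P R : ℂ} {T : Fin 3 → ℂ} (h : Optimal S P R T) :
    Optimal (starRingEnd ℂ S) (starRingEnd ℂ R) (starRingEnd ℂ P)
      (fun i => starRingEnd ℂ (T i)) := by
  refine ⟨h.1.conj, fun S' P' R' h' => ?_⟩
  have h2 := h'.conj
  simp only [Complex.conj_conj] at h2
  have h3 := h.2 _ _ _ h2
  rw [signedArea_conj] at h3 ⊢
  rw [signedArea_swap_right S P R]
  rw [signedArea_swap_right S' P' R'] at h3
  linarith [signedArea_swap_right S P R]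

lemma SharesSideAndAngle.of_map {E F : Type*} [AddCommGroup E] [Module ℝ E] [AddCommGroup F]
    [Module ℝ F] {f : E → F} (hf : Function.Injective f)
    (hl : ∀ (x y : E) (r : ℝ), f (x + r • (y - x)) = f x + r • (f y - f x)) {S P R : E}
    {T : Fin 3 → E} (h : SharesSideAndAngle (f S) (f P) (f R) (fun i => f (T i))) :
    SharesSideAndAngle S P R T := by
  obtain ⟨i, j, k, hij, hik, hjk, r, hr, hs⟩ := h
  refine ⟨i, j, k, hij, hik, hjk, r, hr, hf.image_injective ?_⟩
  simpa [Set.image_insert_eq, hl] using hs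

lemma Nondegenerate.similarity {T : Fin 3 → ℂ} (h : Nondegenerate T) {w : ℂ} (hw : w ≠ 0)
    (v : ℂ) : Nondegenerate (fun i => w * T i + v) := by
  intro i j k hij hik hjk
  rw [signedArea_similarity]
  exact mul_ne_zero (Complex.normSq_pos.2 hw).ne' (h i j k hij hik hjk)

lemma Nondegenerate.conj {T : Fin 3 → ℂ} (h : Nondegenerate T) :
    Nondegenerate (fun i => starRingEnd ℂ (T i)) := by
  intro i j k hij hik hjk
  rw [signedArea_conj]
  exact neg_ne_zero.2 (h i j k hij hik hjk)

lemma eq_or_eq_or_eq_of_ne {i j k : Fin 3} (hij : i ≠ j) (hik : i ≠ k) (hjk : j ≠ k)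
    (m : Fin 3) : m = i ∨ m = j ∨ m = k := by
  omega

lemma forall_fin_three_of_ne {i j k : Fin 3} (hij : i ≠ j) (hik : i ≠ k) (hjk : j ≠ k)
    {p : Fin 3 → Prop} (hi : p i) (hj : p j) (hk : p k) (m : Fin 3) : p m := by
  rcases eq_or_eq_or_eq_of_ne hij hik hjk m with h | h | h <;> rw [h] <;> assumption

lemma exists_third {i j : Fin 3} (hij : i ≠ j) : ∃ k, i ≠ k ∧ j ≠ k := by
  revert i j; decide

/-- An infinitesimal similarity `z ↦ d * z + v` that does not contract and moves no point of `T`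
across a side it touches contradicts optimality. -/
lemma Optimal.false_of_infinitesimal {S P R : ℂ} {T : Fin 3 → ℂ} (h : Optimal S P R T) (d v : ℂ)
    (hd : d ≠ 0) (hre : 0 ≤ d.re)
    (hl : ∀ i, signedArea S P (T i) = 0 → 0 ≤ cross (P - S) (d * T i + v))
    (hb : ∀ i, signedArea P R (T i) = 0 → 0 ≤ cross (R - P) (d * T i + v))
    (hr : ∀ i, signedArea R S (T i) = 0 → 0 ≤ cross (S - R) (d * T i + v)) : False := by
  have key : ∀ f g : ℝ, 0 ≤ f → (f = 0 → 0 ≤ g) → ∀ᶠ t : ℝ in nhdsWithin 0 (Set.Ioi 0),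
      0 ≤ f + t * g := by
    intro f g hf hg
    rcases hf.eq_or_lt with h0 | h0
    · filter_upwards [self_mem_nhdsWithin] with t ht
      have := mul_nonneg (le_of_lt ht) (hg h0.symm)
      linarith
    · have : Filter.Tendsto (fun t : ℝ => f + t * g) (nhdsWithin 0 (Set.Ioi 0))
          (nhds (f + 0 * g)) :=
        ((by fun_prop : Continuous fun t : ℝ => f + t * g).tendsto 0).mono_left
          nhdsWithin_le_nhds
      have := this.eventually (lt_mem_nhds (by linarith : (0 : ℝ) < f + 0 * g))
      filter_upwards [this] with t ht using ht.le
  have e1 := Filter.eventually_all.2 fun i => key _ _ (h.1.left i) (hl i)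
  have e2 := Filter.eventually_all.2 fun i => key _ _ (h.1.base i) (hb i)
  have e3 := Filter.eventually_all.2 fun i => key _ _ (h.1.right i) (hr i)
  obtain ⟨t, ⟨⟨h1, h2⟩, h3⟩, ht⟩ :=
    (((e1.and e2).and e3).and (self_mem_nhdsWithin (a := (0 : ℝ)) (s := Set.Ioi 0))).exists
  have ht : 0 < t := ht
  set w : ℂ := 1 + t * d with hw
  have hn : 1 < Complex.normSq w := by
    have : 0 < Complex.normSq d := Complex.normSq_pos.2 hd
    have e : Complex.normSq w = 1 + 2 * t * d.re + t ^ 2 * Complex.normSq d := by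
      simp [hw, Complex.normSq_apply]; ring
    rw [e]
    have := mul_pos (pow_pos ht 2) this
    have := mul_nonneg ht.le hre
    linarith
  have hw0 : w ≠ 0 := by
    intro h0; rw [h0] at hn; simp at hn; linarith
  have e : ∀ i, w * T i + t * v = T i + t * (d * T i + v) := by
    intro i; rw [hw]; ring
  have hE : Encloses S P R (fun i => w * T i + t * v) := by
    refine ⟨h.1.pos, h.1.iso, fun i => ?_, fun i => ?_, fun i => ?_⟩
    · simp only [e, signedArea_add, cross_smul]; exact h1 i
    · simp only [e, signedArea_add, cross_smul]; exact h2 i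
    · simp only [e, signedArea_add, cross_smul]; exact h3 i
  have hE' := hE.similarity (inv_ne_zero hw0) (-(w⁻¹ * (t * v)))
  have e' : (fun i => w⁻¹ * (w * T i + t * v) + -(w⁻¹ * (t * v))) = T := by
    funext i; field_simp; ring
  rw [e'] at hE'
  have h4 := h.2 _ _ _ hE'
  rw [signedArea_similarity, Complex.normSq_inv, le_inv_mul_iff₀ (by linarith)] at h4
  have := h.1.pos
  nlinarith

lemma Optimal.exists_touch_base {S P R : ℂ} {T : Fin 3 → ℂ} (h : Optimal S P R T) :
    ∃ i, signedArea P R (T i) = 0 := by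
  by_contra! hc
  refine h.false_of_infinitesimal 1 (-S) one_ne_zero (by simp) (fun i hi => ?_)
    (fun i hi => absurd hi (hc i)) (fun i hi => ?_) <;>
  · refine le_of_eq (hi.symm.trans ?_); simp [signedArea, cross]; try ring

lemma Optimal.exists_touch_left {S P R : ℂ} {T : Fin 3 → ℂ} (h : Optimal S P R T) :
    ∃ i, signedArea S P (T i) = 0 := by
  by_contra! hc
  refine h.false_of_infinitesimal 1 (-R) one_ne_zero (by simp) (fun i hi => absurd hi (hc i))
    (fun i hi => ?_) (fun i hi => ?_) <;>
  · refine le_of_eq (hi.symm.trans ?_); simp [signedArea, cross]; try ring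

lemma Optimal.exists_touch_right {S P R : ℂ} {T : Fin 3 → ℂ} (h : Optimal S P R T) :
    ∃ i, signedArea R S (T i) = 0 := by
  by_contra! hc
  refine h.false_of_infinitesimal 1 (-P) one_ne_zero (by simp) (fun i hi => ?_)
    (fun i hi => ?_) (fun i hi => absurd hi (hc i)) <;>
  · refine le_of_eq (hi.symm.trans ?_); simp [signedArea, cross]; try ring

/-- A side of an optimal triangle contains a side of `T`. -/
lemma Optimal.exists_flush {S P R : ℂ} {T : Fin 3 → ℂ} (h : Optimal S P R T) :
    ∃ i j : Fin 3, i ≠ j ∧ ((signedArea S P (T i) = 0 ∧ signedArea S P (T j) = 0) ∨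
      (signedArea P R (T i) = 0 ∧ signedArea P R (T j) = 0) ∨
      (signedArea R S (T i) = 0 ∧ signedArea R S (T j) = 0)) := by
  by_contra! hc
  obtain ⟨i, hi⟩ := h.exists_touch_left
  obtain ⟨j, hj⟩ := h.exists_touch_base
  obtain ⟨k, hk⟩ := h.exists_touch_right
  have ui : ∀ m, signedArea S P (T m) = 0 → m = i := fun m hm => by
    by_contra hne; exact (hc m i hne).1 hm hi
  have uj : ∀ m, signedArea P R (T m) = 0 → m = j := fun m hm => by
    by_contra hne; exact (hc m j hne).2.1 hm hj
  have uk : ∀ m, signedArea R S (T m) = 0 → m = k := fun m hm => by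
    by_contra hne; exact (hc m k hne).2.2 hm hk
  have hpos := h.1.pos
  set α := cross (P - S) (T i) + cross (R - P) (T j) + cross (S - R) (T k) with hα
  set β := cross (P - S) (Complex.I * T i) + cross (R - P) (Complex.I * T j) +
    cross (S - R) (Complex.I * T k) with hβ
  have hα0 : α ≠ 0 := by
    have : α = -signedArea S P R := by
      have : α = -signedArea S P R + signedArea S P (T i) + signedArea P R (T j) +
        signedArea R S (T k) := by simp [hα, signedArea, cross]; ring
      rw [this, hi, hj, hk]; ring
    rw [this]; exact neg_ne_zero.2 hpos.ne'
  obtain ⟨x, y, hx, hy, hxy⟩ : ∃ x y : ℝ, 0 ≤ x ∧ y ≠ 0 ∧ x * α + y * β = 0 := by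
    rcases le_total 0 β with hb | hb
    · exact ⟨β, -α, hb, neg_ne_zero.2 hα0, by ring⟩
    · exact ⟨-β, α, by linarith, hα0, by ring⟩
  have hD : cross (P - S) (R - P) ≠ 0 := by
    have : cross (P - S) (R - P) = signedArea S P R := by simp [signedArea, cross]; ring
    rw [this]; exact hpos.ne'
  set r1 := -cross (P - S) (⟨x, y⟩ * T i) with hr1
  set r2 := -cross (R - P) (⟨x, y⟩ * T j) with hr2
  set v : ℂ := ⟨(r1 * (R - P).re - r2 * (P - S).re) / cross (P - S) (R - P),
    (r1 * (R - P).im - r2 * (P - S).im) / cross (P - S) (R - P)⟩ with hv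
  have cadd : ∀ u a b : ℂ, cross u (a + b) = cross u a + cross u b := by
    intros; simp [cross]; ring
  have v1 : cross (P - S) v = r1 := by
    rw [cross, hv]; field_simp; simp only [cross]; ring
  have v2 : cross (R - P) v = r2 := by
    rw [cross, hv]; field_simp; simp only [cross]; ring
  have v3 : cross (S - R) v = -r1 - r2 := by
    rw [← v1, ← v2]; simp [cross]; ring
  refine h.false_of_infinitesimal ⟨x, y⟩ v (fun h0 => hy (congrArg Complex.im h0)) hx ?_ ?_ ?_
  · intro m hm; rw [ui m hm, cadd, v1, hr1]; simp
  · intro m hm; rw [uj m hm, cadd, v2, hr2]; simp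
  · intro m hm; rw [uk m hm, cadd, v3, hr1, hr2]
    refine le_of_eq (hxy.symm.trans ?_)
    rw [hα, hβ]; simp [cross]; ring

lemma Optimal.false_of_smaller {S P R : ℂ} {T : Fin 3 → ℂ} (h : Optimal S P R T) {S' P' R' : ℂ}
    (h' : Encloses S' P' R' T) (hlt : signedArea S' P' R' < signedArea S P R) : False :=
  (h.2 _ _ _ h').not_gt hlt

lemma add_smul_mk_sub (a b c d r : ℝ) :
    (⟨a, b⟩ : ℂ) + r • (⟨c, d⟩ - ⟨a, b⟩) = ⟨a + r * (c - a), b + r * (d - b)⟩ := by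
  apply Complex.ext <;> simp

/-- The base of an optimal triangle contains a side of `T`; normalized coordinates. -/
lemma Optimal.sharesSideAndAngle_of_base_aux {h : ℝ} (hh : 0 < h) {T : Fin 3 → ℂ}
    (hT : Optimal ⟨0, h⟩ ⟨-1, 0⟩ ⟨1, 0⟩ T) {i j k : Fin 3} (hij : i ≠ j) (hik : i ≠ k)
    (hjk : j ≠ k) {x₁ x₂ x₃ y₃ : ℝ} (hi : T i = ⟨x₁, 0⟩) (hj : T j = ⟨x₂, 0⟩)
    (hk : T k = ⟨x₃, y₃⟩) (hx : x₁ < x₂) (hy : y₃ ≠ 0) :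
    SharesSideAndAngle (⟨0, h⟩ : ℂ) ⟨-1, 0⟩ ⟨1, 0⟩ T := by
  have eD : signedArea ⟨0, h⟩ ⟨-1, 0⟩ ⟨1, 0⟩ = 2 * h := by simp [signedArea, cross]; ring
  have eL : ∀ x y : ℝ, signedArea ⟨0, h⟩ ⟨-1, 0⟩ ⟨x, y⟩ = h * (1 + x) - y := by
    intros; simp [signedArea, cross]; ring
  have eB : ∀ x y : ℝ, signedArea ⟨-1, 0⟩ ⟨1, 0⟩ ⟨x, y⟩ = 2 * y := by
    intros; simp only [signedArea, cross, Complex.sub_re, Complex.sub_im]; ring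
  have eR : ∀ x y : ℝ, signedArea ⟨1, 0⟩ ⟨0, h⟩ ⟨x, y⟩ = h * (1 - x) - y := by
    intros; simp [signedArea, cross]; ring
  have hi1 : -1 ≤ x₁ := by
    have := hT.1.left i; rw [hi, eL] at this
    nlinarith
  have hj1 : x₂ ≤ 1 := by
    have := hT.1.right j; rw [hj, eR] at this
    nlinarith
  have hk1 := hT.1.left k
  have hk2 := hT.1.base k
  have hk3 := hT.1.right k
  rw [hk] at hk1 hk2 hk3
  rw [eL] at hk1
  rw [eB] at hk2
  rw [eR] at hk3
  have hy : 0 < y₃ := lt_of_le_of_ne (by linarith) hy.symm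
  have hx3 : -1 < x₃ := by nlinarith
  have hx3' : x₃ < 1 := by nlinarith
  have tl : x₁ = -1 ∨ y₃ = h * (1 + x₃) := by
    obtain ⟨m, hm⟩ := hT.exists_touch_left
    rcases eq_or_eq_or_eq_of_ne hij hik hjk m with e | e | e <;> rw [e] at hm
    · rw [hi, eL] at hm; left; nlinarith
    · rw [hj, eL] at hm; exfalso; nlinarith
    · rw [hk, eL] at hm; right; linarith
  have tr : x₂ = 1 ∨ y₃ = h * (1 - x₃) := by
    obtain ⟨m, hm⟩ := hT.exists_touch_right
    rcases eq_or_eq_or_eq_of_ne hij hik hjk m with e | e | e <;> rw [e] at hm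
    · rw [hi, eR] at hm; exfalso; nlinarith
    · rw [hj, eR] at hm; left; nlinarith
    · rw [hk, eR] at hm; right; linarith
  by_cases l : y₃ = h * (1 + x₃) <;> by_cases r : y₃ = h * (1 - x₃)
  · have hx0 : x₃ = 0 := by nlinarith
    have hyh : y₃ = h := by rw [l, hx0]; ring
    subst hx0 hyh
    by_cases a : x₁ = -1
    · refine ⟨i, k, j, hik, hij, hjk.symm, 2 / (x₂ - x₁), ?_, ?_⟩
      · rw [le_div_iff₀ (by linarith)]; linarith
      · have : T i + (2 / (x₂ - x₁)) • (T j - T i) = ⟨1, 0⟩ := by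
          have : x₂ - x₁ ≠ 0 := by linarith
          rw [hi, hj, add_smul_mk_sub]
          apply Complex.ext
          · simp only; field_simp; rw [a]; ring
          · simp
        rw [this, hi, hk, a]
        exact Set.insert_comm _ _ _
    by_cases b : x₂ = 1
    · refine ⟨j, k, i, hjk, hij.symm, hik.symm, 2 / (x₂ - x₁), ?_, ?_⟩
      · rw [le_div_iff₀ (by linarith)]; linarith
      · have : T j + (2 / (x₂ - x₁)) • (T i - T j) = ⟨-1, 0⟩ := by
          have : x₂ - x₁ ≠ 0 := by linarith
          rw [hi, hj, add_smul_mk_sub]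
          apply Complex.ext
          · simp only; field_simp; rw [b]; ring
          · simp
        rw [this, hj, hk, b]
        ext z; simp; tauto
    exfalso
    have a' : -1 < x₁ := lt_of_le_of_ne hi1 (Ne.symm a)
    have b' : x₂ < 1 := lt_of_le_of_ne hj1 b
    set w := max (-x₁) x₂ with hw
    have w1 : -x₁ ≤ w := le_max_left _ _
    have w2 : x₂ ≤ w := le_max_right _ _
    have w3 : w < 1 := max_lt (by linarith) b'
    have w0 : 0 < w := by linarith
    refine hT.false_of_smaller (S' := ⟨0, y₃⟩) (P' := ⟨-w, 0⟩) (R' := ⟨w, 0⟩)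
      ⟨?_, ?_, forall_fin_three_of_ne hij hik hjk ?_ ?_ ?_,
        forall_fin_three_of_ne hij hik hjk ?_ ?_ ?_,
        forall_fin_three_of_ne hij hik hjk ?_ ?_ ?_⟩ ?_ <;>
    simp only [hi, hj, hk, signedArea, cross, Complex.normSq_apply, Complex.sub_re,
      Complex.sub_im] <;> nlinarith
  · exfalso
    have b := tr.resolve_right r
    have hk3' : 0 < h * (1 - x₃) - y₃ := lt_of_le_of_ne hk3 (fun e => r (by linarith))
    have x30 : x₃ < 0 := by nlinarith
    refine hT.false_of_smaller (S' := ⟨x₃, y₃⟩) (P' := ⟨2 * x₃ - 1, 0⟩) (R' := ⟨1, 0⟩)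
      ⟨?_, ?_, forall_fin_three_of_ne hij hik hjk ?_ ?_ ?_,
        forall_fin_three_of_ne hij hik hjk ?_ ?_ ?_,
        forall_fin_three_of_ne hij hik hjk ?_ ?_ ?_⟩ ?_ <;>
    simp only [hi, hj, hk, signedArea, cross, Complex.normSq_apply, Complex.sub_re,
      Complex.sub_im] <;> clear hi hj hk eD eL eB eR hT
    · nlinarith
    · ring
    · nlinarith
    · nlinarith
    · nlinarith
    · nlinarith
    · nlinarith
    · nlinarith
    · nlinarith
    · nlinarith
    · nlinarith
    · rw [l]; nlinarith [mul_pos hh (pow_pos (neg_pos.2 x30) 2)]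
  · exfalso
    have a := tl.resolve_right l
    have hk1' : 0 < h * (1 + x₃) - y₃ := lt_of_le_of_ne hk1 (fun e => l (by linarith))
    have x30 : 0 < x₃ := by nlinarith
    refine hT.false_of_smaller (S' := ⟨x₃, y₃⟩) (P' := ⟨-1, 0⟩) (R' := ⟨2 * x₃ + 1, 0⟩)
      ⟨?_, ?_, forall_fin_three_of_ne hij hik hjk ?_ ?_ ?_,
        forall_fin_three_of_ne hij hik hjk ?_ ?_ ?_,
        forall_fin_three_of_ne hij hik hjk ?_ ?_ ?_⟩ ?_ <;>
    simp only [hi, hj, hk, signedArea, cross, Complex.normSq_apply, Complex.sub_re,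
      Complex.sub_im] <;> clear hi hj hk eD eL eB eR hT
    · nlinarith
    · ring
    · nlinarith
    · nlinarith
    · nlinarith
    · nlinarith
    · nlinarith
    · nlinarith
    · nlinarith
    · nlinarith
    · nlinarith
    · rw [r]; nlinarith [mul_pos hh (pow_pos x30 2)]
  · exfalso
    have a := tl.resolve_right l
    have b := tr.resolve_right r
    have hk1' : 0 < h * (1 + x₃) - y₃ := lt_of_le_of_ne hk1 (fun e => l (by linarith))
    have hk3' : 0 < h * (1 - x₃) - y₃ := lt_of_le_of_ne hk3 (fun e => r (by linarith))
    set g := max (y₃ / (1 + x₃)) (y₃ / (1 - x₃)) with hg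
    have g1 : y₃ / (1 + x₃) ≤ g := le_max_left _ _
    have g2 : y₃ / (1 - x₃) ≤ g := le_max_right _ _
    rw [div_le_iff₀ (by linarith)] at g1 g2
    have g3 : g < h := max_lt (by rw [div_lt_iff₀ (by linarith)]; linarith)
      (by rw [div_lt_iff₀ (by linarith)]; linarith)
    have g0 : 0 < g := by nlinarith
    refine hT.false_of_smaller (S' := ⟨0, g⟩) (P' := ⟨-1, 0⟩) (R' := ⟨1, 0⟩)
      ⟨?_, ?_, forall_fin_three_of_ne hij hik hjk ?_ ?_ ?_,
        forall_fin_three_of_ne hij hik hjk ?_ ?_ ?_,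
        forall_fin_three_of_ne hij hik hjk ?_ ?_ ?_⟩ ?_ <;>
    simp only [hi, hj, hk, a, b, signedArea, cross, Complex.normSq_apply, Complex.sub_re,
      Complex.sub_im] <;> nlinarith

lemma SharesSideAndAngle.of_similarity {w v S P R : ℂ} {T : Fin 3 → ℂ} (hw : w ≠ 0)
    (h : SharesSideAndAngle (w * S + v) (w * P + v) (w * R + v) (fun i => w * T i + v)) :
    SharesSideAndAngle S P R T := by
  refine SharesSideAndAngle.of_map (f := fun z => w * z + v) ?_ ?_ h
  · intro a b hab
    exact mul_left_cancel₀ hw (add_right_cancel hab)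
  · intro x y r
    simp only [Complex.real_smul]; ring

lemma Optimal.sharesSideAndAngle_of_base {S P R : ℂ} {T : Fin 3 → ℂ} (h : Optimal S P R T)
    (hT : Nondegenerate T) {i j : Fin 3} (hij : i ≠ j) (hi : signedArea P R (T i) = 0)
    (hj : signedArea P R (T j) = 0) : SharesSideAndAngle S P R T := by
  obtain ⟨k, hik, hjk⟩ := exists_third hij
  have hpos := h.1.pos
  have hiso := h.1.iso
  set e : ℂ := (R - P) / 2 with he
  have he0 : e ≠ 0 := by
    intro h0
    have : R = P := by
      have : R - P = 0 := by rw [he] at h0; simpa using h0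
      exact sub_eq_zero.1 this
    rw [this] at hpos
    simp [signedArea, cross] at hpos
    linarith
  set v : ℂ := -(e⁻¹ * ((P + R) / 2)) with hv
  refine SharesSideAndAngle.of_similarity (w := e⁻¹) (v := v) (inv_ne_zero he0) ?_
  have hP : e⁻¹ * P + v = ⟨-1, 0⟩ := by
    have : (⟨-1, 0⟩ : ℂ) = -1 := by apply Complex.ext <;> simp
    rw [this, hv]; field_simp; rw [he]; ring
  have hR : e⁻¹ * R + v = ⟨1, 0⟩ := by
    have : (⟨1, 0⟩ : ℂ) = 1 := by apply Complex.ext <;> simp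
    rw [this, hv]; field_simp; rw [he]; ring
  have hO := h.similarity (inv_ne_zero he0) v
  have hN := hT.similarity (inv_ne_zero he0) v
  have si : signedArea (e⁻¹ * P + v) (e⁻¹ * R + v) (e⁻¹ * T i + v) = 0 := by
    rw [signedArea_similarity, hi, mul_zero]
  have sj : signedArea (e⁻¹ * P + v) (e⁻¹ * R + v) (e⁻¹ * T j + v) = 0 := by
    rw [signedArea_similarity, hj, mul_zero]
  rw [hP, hR] at hO si sj ⊢
  generalize e⁻¹ * S + v = S' at *
  generalize hT' : (fun i => e⁻¹ * T i + v) = T' at *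
  have ei : e⁻¹ * T i + v = T' i := by rw [← hT']
  have ej : e⁻¹ * T j + v = T' j := by rw [← hT']
  rw [ei] at si
  rw [ej] at sj
  have hS : S' = ⟨0, S'.im⟩ := by
    have := hO.1.iso
    simp [Complex.normSq_apply] at this
    apply Complex.ext
    · simp; nlinarith
    · rfl
  have hpos' := hO.1.pos
  rw [hS] at hO hpos' ⊢
  have hh : 0 < S'.im := by
    simp [signedArea, cross] at hpos'; linarith
  have hi' : T' i = ⟨(T' i).re, 0⟩ := by
    simp [signedArea, cross] at si
    apply Complex.ext
    · rfl
    · simp; linarith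
  have hj' : T' j = ⟨(T' j).re, 0⟩ := by
    simp [signedArea, cross] at sj
    apply Complex.ext
    · rfl
    · simp; linarith
  have hk' : T' k = ⟨(T' k).re, (T' k).im⟩ := rfl
  have hn := hN i j k hij hik hjk
  rw [hi', hj', hk'] at hn
  simp [signedArea, cross] at hn
  have hy : (T' k).im ≠ 0 := fun e => hn.2 e
  have hx : (T' j).re - (T' i).re ≠ 0 := fun e => hn.1 e
  rcases lt_or_gt_of_ne (sub_ne_zero.1 hx) with hlt | hlt
  · exact hO.sharesSideAndAngle_of_base_aux hh hij.symm hjk hik hj' hi' hk' hlt hy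
  · exact hO.sharesSideAndAngle_of_base_aux hh hij hik hjk hi' hj' hk' hlt hy

lemma exists_one_le_sq_mul_eq_one {n : ℝ} (h0 : 0 < n) (h1 : n ≤ 1) :
    ∃ q : ℝ, 1 ≤ q ∧ q ^ 2 * n = 1 := by
  refine ⟨(√n)⁻¹, ?_, ?_⟩
  · rw [one_le_inv₀ (Real.sqrt_pos.2 h0)]
    exact Real.sqrt_le_one.2 h1
  · rw [inv_pow, Real.sq_sqrt h0.le, inv_mul_cancel₀ h0.ne']

lemma exists_shorter_leg {t z g m : ℝ} (ht : t ^ 2 = (1 - z) ^ 2 + g ^ 2)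
    (hz : 0 < z) (hg : g ≠ 0) (hm : 2 * z < m) (hm1 : m < 1) (hzg : z ^ 2 + g ^ 2 < 2 * z) :
    ∃ p q : ℝ, m ≤ p ∧ p < 1 ∧ 1 ≤ q ∧ q ^ 2 * ((p - z) ^ 2 + g ^ 2) = p ^ 2 ∧
      p * q * t < 1 := by
  obtain ⟨p, hp⟩ : ∃ p, p = max m ((z ^ 2 + g ^ 2) / (2 * z)) := ⟨_, rfl⟩
  have p1 : m ≤ p := hp ▸ le_max_left _ _
  have p2 : (z ^ 2 + g ^ 2) / (2 * z) ≤ p := hp ▸ le_max_right _ _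
  have p3 : p < 1 := by
    rw [hp]
    refine max_lt hm1 ?_
    rw [div_lt_iff₀ (by linarith)]
    linarith
  rw [div_le_iff₀ (by linarith)] at p2
  have p0 : 0 < p := by linarith
  have hM : 0 < (p - z) ^ 2 + g ^ 2 := by positivity
  obtain ⟨q, hq, hqn⟩ := exists_one_le_sq_mul_eq_one
    (n := ((p - z) ^ 2 + g ^ 2) / p ^ 2) (by positivity)
    (by rw [div_le_one (by positivity)]; linarith)
  have hqn' : q ^ 2 * ((p - z) ^ 2 + g ^ 2) = p ^ 2 := by
    field_simp at hqn; exact hqn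
  refine ⟨p, q, p1, p3, hq, hqn', ?_⟩
  refine lt_of_pow_lt_pow_left₀ 2 zero_le_one ?_
  have h3 : p ^ 4 * t ^ 2 < (p - z) ^ 2 + g ^ 2 := by
    have a1 : 0 < p - z - p ^ 2 * (1 - z) := by
      have : p - z - p ^ 2 * (1 - z) = (1 - p) * (p - z * (1 + p)) := by ring
      rw [this]; exact mul_pos (by linarith) (by nlinarith)
    have a2 : 0 ≤ p ^ 2 * (1 - z) := mul_nonneg (by positivity) (by linarith)
    have a3 : (p ^ 2 * (1 - z)) ^ 2 < (p - z) ^ 2 :=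
      pow_lt_pow_left₀ (by linarith) a2 (by norm_num)
    have a4 : p ^ 4 * g ^ 2 ≤ g ^ 2 :=
      mul_le_of_le_one_left (sq_nonneg g) (pow_le_one₀ p0.le p3.le)
    rw [ht]
    linarith
  have h4 : (p * q * t) ^ 2 * p ^ 2 < 1 ^ 2 * p ^ 2 := by
    have hq2 : 0 < q ^ 2 := by positivity
    linarith [mul_lt_mul_of_pos_left h3 hq2]
  exact lt_of_mul_lt_mul_right h4 (by positivity)

section LegCoordinates

variable {c s : ℝ} {T : Fin 3 → ℂ} {i j k : Fin 3} {x₁ x₂ x₃ y₃ : ℝ}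

lemma Optimal.false_of_apex_acute (hT : Optimal ⟨0, 0⟩ ⟨1, 0⟩ ⟨c, s⟩ T)
    (hcs : c ^ 2 + s ^ 2 = 1) (hs : 0 < s) (hij : i ≠ j) (hik : i ≠ k) (hjk : j ≠ k)
    (hi : T i = ⟨0, 0⟩) (hj : T j = ⟨x₂, 0⟩) (hk : T k = ⟨x₃, y₃⟩) (hx2 : 0 < x₂)
    (hx2' : x₂ ≤ 1) (hy : 0 < y₃) (hn : x₃ ^ 2 + y₃ ^ 2 ≤ 1) (hc : 0 ≤ c)
    (hl : c * y₃ < s * x₃) : False := by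
  obtain ⟨q, hq, hqn⟩ := exists_one_le_sq_mul_eq_one (by positivity : 0 < x₃ ^ 2 + y₃ ^ 2) hn
  have hlt : q * y₃ < s := by
    refine lt_of_pow_lt_pow_left₀ 2 hs.le ?_
    have h1 : (c * y₃) ^ 2 < (s * x₃) ^ 2 := by
      have : 0 ≤ c * y₃ := by positivity
      nlinarith
    have h2 : y₃ ^ 2 < s ^ 2 * (x₃ ^ 2 + y₃ ^ 2) := by
      have : c ^ 2 = 1 - s ^ 2 := by linarith
      nlinarith
    have hq2 : 0 < q ^ 2 := by positivity
    have := mul_lt_mul_of_pos_left h2 hq2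
    have e : q ^ 2 * (s ^ 2 * (x₃ ^ 2 + y₃ ^ 2)) = s ^ 2 * (q ^ 2 * (x₃ ^ 2 + y₃ ^ 2)) := by ring
    rw [e, hqn] at this
    linarith
  have hqy : 0 < q * y₃ := by positivity
  refine hT.false_of_smaller (S' := ⟨0, 0⟩) (P' := ⟨1, 0⟩) (R' := ⟨q * x₃, q * y₃⟩)
    ⟨?_, ?_, forall_fin_three_of_ne hij hik hjk ?_ ?_ ?_,
      forall_fin_three_of_ne hij hik hjk ?_ ?_ ?_,
      forall_fin_three_of_ne hij hik hjk ?_ ?_ ?_⟩ ?_ <;>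
  simp only [hi, hj, hk, signedArea, cross, Complex.normSq_apply, Complex.sub_re,
    Complex.sub_im] <;> clear hi hj hk hT <;> nlinarith

lemma Optimal.false_of_apex_obtuse_of_leg (hT : Optimal ⟨0, 0⟩ ⟨1, 0⟩ ⟨c, s⟩ T)
    (hcs : c ^ 2 + s ^ 2 = 1) (hs : 0 < s) (hij : i ≠ j) (hik : i ≠ k) (hjk : j ≠ k)
    (hi : T i = ⟨0, 0⟩) (hj : T j = ⟨1, 0⟩) (hk : T k = ⟨x₃, y₃⟩) (hy : 0 < y₃)
    (hn : x₃ ^ 2 + y₃ ^ 2 ≤ 1) (hc : c < 0)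
    (hb : (1 - c) * y₃ < s * (1 - x₃)) : False := by
  have hc1 : -1 < c := by nlinarith
  have hg : 0 < 1 - x₃ := by nlinarith
  have hn0 : 0 < (1 - x₃) ^ 2 + y₃ ^ 2 := by positivity
  obtain ⟨μ, hμ⟩ : ∃ μ, μ = 2 * (1 - x₃) / ((1 - x₃) ^ 2 + y₃ ^ 2) := ⟨_, rfl⟩
  rw [eq_div_iff hn0.ne'] at hμ
  have hμ1 : 1 ≤ μ := by
    by_contra! hlt
    nlinarith
  have hlt : μ * y₃ < s := by
    have h1 : 2 * (1 - x₃) * y₃ < s * ((1 - x₃) ^ 2 + y₃ ^ 2) := by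
      have a1 : 0 < (1 - x₃) * (1 + c) - s * y₃ := by
        have : s * (s * (1 - x₃) - (1 - c) * y₃) = (1 - c) * ((1 - x₃) * (1 + c) - s * y₃) := by
          have : s ^ 2 = (1 - c) * (1 + c) := by linarith
          linear_combination (1 - x₃) * this
        have h2 : 0 < s * (s * (1 - x₃) - (1 - c) * y₃) := mul_pos hs (by linarith)
        rw [this] at h2
        exact pos_of_mul_pos_right h2 (by linarith)
      have a2 : 0 < (1 - x₃) * (1 - c) - s * y₃ := by nlinarith
      have a3 := mul_pos a1 a2
      have e : ((1 - x₃) * (1 + c) - s * y₃) * ((1 - x₃) * (1 - c) - s * y₃) =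
          s * (s * ((1 - x₃) ^ 2 + y₃ ^ 2) - 2 * (1 - x₃) * y₃) := by
        have : s ^ 2 = (1 - c) * (1 + c) := by linarith
        linear_combination -(1 - x₃) ^ 2 * this
      rw [e] at a3
      have := pos_of_mul_pos_right a3 hs.le
      linarith
    by_contra! hge
    nlinarith
  have hqy : 0 < μ * y₃ := by positivity
  refine hT.false_of_smaller (S' := ⟨0, 0⟩) (P' := ⟨1, 0⟩)
    (R' := ⟨1 - μ * (1 - x₃), μ * y₃⟩)
    ⟨?_, ?_, forall_fin_three_of_ne hij hik hjk ?_ ?_ ?_,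
      forall_fin_three_of_ne hij hik hjk ?_ ?_ ?_,
      forall_fin_three_of_ne hij hik hjk ?_ ?_ ?_⟩ ?_ <;>
  simp only [hi, hj, hk, signedArea, cross, Complex.normSq_apply, Complex.sub_re,
    Complex.sub_im] <;> clear hi hj hk hT
  · nlinarith
  · linear_combination (-μ) * hμ
  all_goals nlinarith

lemma Optimal.false_of_apex_obtuse_of_base (hT : Optimal ⟨0, 0⟩ ⟨1, 0⟩ ⟨c, s⟩ T)
    (hcs : c ^ 2 + s ^ 2 = 1) (hs : 0 < s) (hij : i ≠ j) (hik : i ≠ k) (hjk : j ≠ k)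
    (hi : T i = ⟨0, 0⟩) (hj : T j = ⟨x₂, 0⟩) (hk : T k = ⟨x₃, y₃⟩) (hx2 : 0 < x₂)
    (hx2' : x₂ < 1) (hy : 0 < y₃) (hc : c < 0) (hl : c * y₃ < s * x₃)
    (hb : s * (1 - x₃) = (1 - c) * y₃) : False := by
  have hc1 : -1 < c := by nlinarith
  obtain ⟨t, rfl⟩ : ∃ t, y₃ = t * s := ⟨y₃ / s, by field_simp⟩
  have ht0 : 0 < t := pos_of_mul_pos_left hy hs.le
  have hx3 : x₃ = 1 - t * (1 - c) := by
    have : s * (1 - x₃) = s * (t * (1 - c)) := by rw [hb]; ring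
    linarith [mul_left_cancel₀ hs.ne' this]
  have ht1 : t < 1 := by
    have : 0 < s * (1 - t) := by rw [hx3] at hl; nlinarith
    linarith [pos_of_mul_pos_right this hs.le]
  rcases le_or_gt (1 / 2) t with ht | ht
  · refine hT.false_of_infinitesimal Complex.I 0 Complex.I_ne_zero (by simp)
      (forall_fin_three_of_ne hij hik hjk ?_ ?_ ?_)
      (forall_fin_three_of_ne hij hik hjk ?_ ?_ ?_)
      (forall_fin_three_of_ne hij hik hjk ?_ ?_ ?_) <;>
    simp only [hi, hj, hk, signedArea, cross, Complex.sub_re, Complex.sub_im, Complex.add_re,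
      Complex.add_im, Complex.mul_re, Complex.mul_im, Complex.I_re, Complex.I_im,
      Complex.zero_re, Complex.zero_im] <;> intro hm <;> clear hi hj hk hT
    · linarith
    · linarith
    · exfalso; linarith
    · exfalso; linarith
    · exfalso; nlinarith
    · have e : (c - 1) * (0 * (t * s) + 1 * x₃ + 0) - (s - 0) * (0 * x₃ - 1 * (t * s) + 0) =
          (1 - c) * (2 * t - 1) := by
        rw [hx3]; linear_combination t * hcs
      rw [e]; exact mul_nonneg (by linarith) (by linarith)
    · linarith
    · exfalso; nlinarith
    · exfalso; nlinarith
  rcases le_or_gt x₂ (2 * x₃) with h2 | h2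
  · refine hT.false_of_smaller (S' := ⟨x₃, t * s⟩) (P' := ⟨0, 0⟩) (R' := ⟨2 * x₃, 0⟩)
      ⟨?_, ?_, forall_fin_three_of_ne hij hik hjk ?_ ?_ ?_,
        forall_fin_three_of_ne hij hik hjk ?_ ?_ ?_,
        forall_fin_three_of_ne hij hik hjk ?_ ?_ ?_⟩ ?_ <;>
    simp only [hi, hj, hk, signedArea, cross, Complex.normSq_apply, Complex.sub_re,
      Complex.sub_im] <;> clear hi hj hk hT
    on_goal 12 =>
      have : 2 * t * x₃ < 1 := by rw [hx3]; nlinarith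
      nlinarith
    all_goals nlinarith
  · refine hT.false_of_smaller (S' := ⟨x₃, t * s⟩) (P' := ⟨2 * x₃ - x₂, 0⟩) (R' := ⟨x₂, 0⟩)
      ⟨?_, ?_, forall_fin_three_of_ne hij hik hjk ?_ ?_ ?_,
        forall_fin_three_of_ne hij hik hjk ?_ ?_ ?_,
        forall_fin_three_of_ne hij hik hjk ?_ ?_ ?_⟩ ?_ <;>
    simp only [hi, hj, hk, signedArea, cross, Complex.normSq_apply, Complex.sub_re,
      Complex.sub_im] <;> clear hi hj hk hT
    on_goal 12 =>
      have : 2 * t * (x₂ - x₃) < 1 := by rw [hx3]; nlinarith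
      nlinarith
    all_goals nlinarith

lemma Optimal.false_of_base_vertex (hT : Optimal ⟨0, 0⟩ ⟨1, 0⟩ ⟨c, s⟩ T)
    (hcs : c ^ 2 + s ^ 2 = 1) (hs : 0 < s) (hij : i ≠ j) (hik : i ≠ k) (hjk : j ≠ k)
    {t : ℝ} (hi : T i = ⟨x₁, 0⟩) (hj : T j = ⟨1, 0⟩) (hk : T k = ⟨t * c, t * s⟩) (hx1 : 0 < x₁)
    (hx1' : x₁ < 1) (ht0 : 0 < t) (ht1 : t < 1) : False := by
  have hc1 : c < 1 := by nlinarith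
  rcases le_or_gt c t with ht | ht
  · refine hT.false_of_infinitesimal (-Complex.I) Complex.I (by simp) (by simp)
      (forall_fin_three_of_ne hij hik hjk ?_ ?_ ?_)
      (forall_fin_three_of_ne hij hik hjk ?_ ?_ ?_)
      (forall_fin_three_of_ne hij hik hjk ?_ ?_ ?_) <;>
    simp only [hi, hj, hk, signedArea, cross, Complex.sub_re, Complex.sub_im, Complex.add_re,
      Complex.add_im, Complex.mul_re, Complex.mul_im, Complex.I_re, Complex.I_im,
      Complex.neg_re, Complex.neg_im] <;> intro hm <;> clear hi hj hk hT
    on_goal 9 =>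
      have e : (0 - c) * (-0 * (t * s) + -1 * (t * c) + 1) -
          (0 - s) * (-0 * (t * c) - -1 * (t * s) + 0) = t - c := by
        linear_combination t * hcs
      rw [e]; linarith
    all_goals nlinarith
  have hts : 0 < t * s := by positivity
  have htc : t * c < 1 := by nlinarith
  rcases lt_or_ge (2 * t * c) 1 with h1 | h1
  · obtain ⟨q, hq, hqn⟩ := exists_one_le_sq_mul_eq_one
      (by positivity : 0 < (1 - t * c) ^ 2 + (t * s) ^ 2) (by
        have : (1 - t * c) ^ 2 + (t * s) ^ 2 = 1 - t * (2 * c - t) := by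
          linear_combination t ^ 2 * hcs
        have := mul_pos ht0 (by linarith : 0 < 2 * c - t)
        linarith)
    have hlt : q * (t * s) < s := by
      have : q * t < 1 := by
        refine lt_of_pow_lt_pow_left₀ 2 zero_le_one ?_
        have : t ^ 2 < (1 - t * c) ^ 2 + (t * s) ^ 2 := by nlinarith
        have hq2 : 0 < q ^ 2 := by positivity
        nlinarith
      nlinarith
    have hqy : 0 < q * (t * s) := by positivity
    refine hT.false_of_smaller (S' := ⟨1, 0⟩) (P' := ⟨1 - q * (1 - t * c), q * (t * s)⟩)
      (R' := ⟨0, 0⟩)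
      ⟨?_, ?_, forall_fin_three_of_ne hij hik hjk ?_ ?_ ?_,
        forall_fin_three_of_ne hij hik hjk ?_ ?_ ?_,
        forall_fin_three_of_ne hij hik hjk ?_ ?_ ?_⟩ ?_ <;>
    simp only [hi, hj, hk, signedArea, cross, Complex.normSq_apply, Complex.sub_re,
      Complex.sub_im] <;> clear hi hj hk hT <;> nlinarith
  rcases le_or_gt (1 - x₁) (2 * (1 - t * c)) with h2 | h2
  · refine hT.false_of_smaller (S' := ⟨t * c, t * s⟩) (P' := ⟨2 * (t * c) - 1, 0⟩)
      (R' := ⟨1, 0⟩)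
      ⟨?_, ?_, forall_fin_three_of_ne hij hik hjk ?_ ?_ ?_,
        forall_fin_three_of_ne hij hik hjk ?_ ?_ ?_,
        forall_fin_three_of_ne hij hik hjk ?_ ?_ ?_⟩ ?_ <;>
    simp only [hi, hj, hk, signedArea, cross, Complex.normSq_apply, Complex.sub_re,
      Complex.sub_im] <;> clear hi hj hk hT
    on_goal 12 =>
      have : 2 * t * (1 - t * c) < 1 := by nlinarith
      nlinarith
    all_goals nlinarith
  · have ht2 : t ^ 2 = (1 - (1 - t * c)) ^ 2 + (t * s) ^ 2 := by
      linear_combination (-t ^ 2) * hcs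
    obtain ⟨p, q, p1, p3, hq, hqn, hlt⟩ := exists_shorter_leg ht2
      (by linarith : 0 < 1 - t * c) hts.ne' h2 (by linarith) (by nlinarith)
    have p0 : 0 < p := by linarith
    have hqg : 0 < q * (t * s) := by positivity
    refine hT.false_of_smaller (S' := ⟨1 - p, 0⟩) (P' := ⟨1, 0⟩)
      (R' := ⟨1 - p + q * (p - (1 - t * c)), q * (t * s)⟩)
      ⟨?_, ?_, forall_fin_three_of_ne hij hik hjk ?_ ?_ ?_,
        forall_fin_three_of_ne hij hik hjk ?_ ?_ ?_,
        forall_fin_three_of_ne hij hik hjk ?_ ?_ ?_⟩ ?_ <;>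
    simp only [hi, hj, hk, signedArea, cross, Complex.normSq_apply, Complex.sub_re,
      Complex.sub_im] <;> clear hi hj hk hT
    · linarith [mul_pos p0 hqg]
    · linear_combination -hqn
    · linarith
    · linarith
    · linarith [mul_pos p0 hts]
    · linarith [mul_pos (sub_pos.2 hx1') hqg]
    · linarith
    · linarith [mul_nonneg (mul_nonneg p0.le hts.le) (sub_nonneg.2 hq)]
    · linarith [mul_nonneg (by linarith : 0 ≤ x₁ - (1 - p)) hqg.le]
    · linarith [mul_pos p0 hqg]
    · linarith
    · linarith [mul_lt_mul_of_pos_right hlt hs]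

lemma Optimal.false_of_leg_interior (hT : Optimal ⟨0, 0⟩ ⟨1, 0⟩ ⟨c, s⟩ T)
    (hcs : c ^ 2 + s ^ 2 = 1) (hs : 0 < s) (hij : i ≠ j) (hik : i ≠ k) (hjk : j ≠ k)
    (hi : T i = ⟨x₁, 0⟩) (hj : T j = ⟨x₂, 0⟩) (hk : T k = ⟨c, s⟩) (hx1 : 0 < x₁)
    (hx : x₁ < x₂) (hx2 : x₂ < 1) : False := by
  have hc1 : c < 1 := by nlinarith
  rcases lt_or_ge x₁ (2 * c) with h1 | h1
  · set n := (x₁ - c) ^ 2 + s ^ 2 with hn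
    have hn0 : 0 < n := by positivity
    have hr := Real.sq_sqrt hn0.le
    have hr0 := Real.sqrt_pos.2 hn0
    set ρ := √n
    have hr1 : ρ < 1 := by nlinarith
    have hr2 : 1 - x₁ ≤ ρ := by
      by_contra! hlt
      nlinarith
    refine hT.false_of_smaller (S' := ⟨x₁, 0⟩) (P' := ⟨x₁ + ρ, 0⟩) (R' := ⟨c, s⟩)
      ⟨?_, ?_, forall_fin_three_of_ne hij hik hjk ?_ ?_ ?_,
        forall_fin_three_of_ne hij hik hjk ?_ ?_ ?_,
        forall_fin_three_of_ne hij hik hjk ?_ ?_ ?_⟩ ?_ <;>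
    simp only [hi, hj, hk, signedArea, cross, Complex.normSq_apply, Complex.sub_re,
      Complex.sub_im] <;> clear hi hj hk hT <;> nlinarith
  · have hxc : c ≤ x₁ := by
      rcases le_total c 0 with h | h <;> linarith
    refine hT.false_of_infinitesimal Complex.I ⟨s, -c⟩ Complex.I_ne_zero (by simp)
      (forall_fin_three_of_ne hij hik hjk ?_ ?_ ?_)
      (forall_fin_three_of_ne hij hik hjk ?_ ?_ ?_)
      (forall_fin_three_of_ne hij hik hjk ?_ ?_ ?_) <;>
    simp only [hi, hj, hk, signedArea, cross, Complex.sub_re, Complex.sub_im, Complex.add_re,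
      Complex.add_im, Complex.mul_re, Complex.mul_im, Complex.I_re, Complex.I_im] <;>
      intro hm <;> clear hi hj hk hT <;> nlinarith

end LegCoordinates

/-- The left leg of an optimal triangle contains a side of `T`; normalized coordinates. -/
lemma Optimal.sharesSideAndAngle_of_leg_aux {c s : ℝ} {T : Fin 3 → ℂ}
    (hT : Optimal ⟨0, 0⟩ ⟨1, 0⟩ ⟨c, s⟩ T) (hcs : c ^ 2 + s ^ 2 = 1) (hs : 0 < s) {i j k : Fin 3}
    (hij : i ≠ j) (hik : i ≠ k) (hjk : j ≠ k) {x₁ x₂ x₃ y₃ : ℝ} (hi : T i = ⟨x₁, 0⟩)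
    (hj : T j = ⟨x₂, 0⟩) (hk : T k = ⟨x₃, y₃⟩) (hx : x₁ < x₂) (hy : y₃ ≠ 0) :
    SharesSideAndAngle (⟨0, 0⟩ : ℂ) ⟨1, 0⟩ ⟨c, s⟩ T := by
  have eL : ∀ x y : ℝ, signedArea ⟨0, 0⟩ ⟨1, 0⟩ ⟨x, y⟩ = y := by
    intros; simp [signedArea, cross]
  have eB : ∀ x y : ℝ, signedArea ⟨1, 0⟩ ⟨c, s⟩ ⟨x, y⟩ = s * (1 - x) - (1 - c) * y := by
    intros; simp [signedArea, cross]; ring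
  have eR : ∀ x y : ℝ, signedArea ⟨c, s⟩ ⟨0, 0⟩ ⟨x, y⟩ = s * x - c * y := by
    intros; simp [signedArea, cross]; ring
  have hi1 : 0 ≤ x₁ := by
    have := hT.1.right i; rw [hi, eR] at this
    nlinarith
  have hj1 : x₂ ≤ 1 := by
    have := hT.1.base j; rw [hj, eB] at this
    nlinarith
  have hk1 := hT.1.left k
  have hk2 := hT.1.base k
  have hk3 := hT.1.right k
  rw [hk] at hk1 hk2 hk3
  rw [eL] at hk1
  rw [eB] at hk2
  rw [eR] at hk3
  have hy : 0 < y₃ := lt_of_le_of_ne hk1 hy.symm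
  have hc1 : c < 1 := by nlinarith
  have hn : x₃ ^ 2 + y₃ ^ 2 ≤ 1 := by
    have h1 : s ^ 2 * (x₃ ^ 2 + y₃ ^ 2) =
        (s * x₃ - c * y₃ + y₃) ^ 2 - 2 * (1 - c) * ((s * x₃ - c * y₃) * y₃) := by
      linear_combination y₃ ^ 2 * hcs
    have h2 := mul_nonneg (by linarith : 0 ≤ 2 * (1 - c)) (mul_nonneg hk3 hk1)
    have h3 : (s * x₃ - c * y₃ + y₃) ^ 2 ≤ s ^ 2 :=
      pow_le_pow_left₀ (by linarith) (by linarith) 2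
    have h4 : s ^ 2 * (x₃ ^ 2 + y₃ ^ 2) ≤ s ^ 2 * 1 := by linarith
    exact le_of_mul_le_mul_left h4 (by positivity)
  have tr : x₁ = 0 ∨ s * x₃ = c * y₃ := by
    obtain ⟨m, hm⟩ := hT.exists_touch_right
    rcases eq_or_eq_or_eq_of_ne hij hik hjk m with e | e | e <;> rw [e] at hm
    · rw [hi, eR] at hm; left; nlinarith
    · rw [hj, eR] at hm; exfalso; nlinarith
    · rw [hk, eR] at hm; right; linarith
  have tb : x₂ = 1 ∨ s * (1 - x₃) = (1 - c) * y₃ := by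
    obtain ⟨m, hm⟩ := hT.exists_touch_base
    rcases eq_or_eq_or_eq_of_ne hij hik hjk m with e | e | e <;> rw [e] at hm
    · rw [hi, eB] at hm; exfalso; nlinarith
    · rw [hj, eB] at hm; left; nlinarith
    · rw [hk, eB] at hm; right; linarith
  have hys : y₃ ≤ s := by linarith
  by_cases r : s * x₃ = c * y₃
  · obtain ⟨t, rfl⟩ : ∃ t, y₃ = t * s := ⟨y₃ / s, by field_simp⟩
    have ht0 : 0 < t := pos_of_mul_pos_left hy hs.le
    have ht1 : t ≤ 1 := by nlinarith
    obtain rfl : x₃ = t * c := mul_left_cancel₀ hs.ne' (by rw [r]; ring)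
    by_cases a : x₁ = 0
    · by_cases b : x₂ = 1
      · subst a b
        refine ⟨i, j, k, hij, hik, hjk, t⁻¹, (one_le_inv₀ ht0).2 ht1, ?_⟩
        have : (⟨0, 0⟩ : ℂ) + t⁻¹ • (⟨t * c, t * s⟩ - ⟨0, 0⟩) = ⟨c, s⟩ := by
          rw [add_smul_mk_sub]
          apply Complex.ext <;> simp <;> field_simp
        rw [hi, hj, hk, this]
      · obtain rfl : t = 1 := by
          have := tb.resolve_left b
          have : s * t = s * 1 := by linarith
          exact mul_left_cancel₀ hs.ne' this
        subst a
        refine ⟨i, k, j, hik, hij, hjk.symm, x₂⁻¹, (one_le_inv₀ hx).2 hj1, ?_⟩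
        have : (⟨0, 0⟩ : ℂ) + x₂⁻¹ • (⟨x₂, 0⟩ - ⟨0, 0⟩) = ⟨1, 0⟩ := by
          rw [add_smul_mk_sub]
          apply Complex.ext <;> simp
          exact inv_mul_cancel₀ hx.ne'
        rw [hi, hj, hk, this]
        ext z; simp; tauto
    · have a' : 0 < x₁ := lt_of_le_of_ne hi1 (Ne.symm a)
      by_cases b : s * (1 - t * c) = (1 - c) * (t * s)
      · obtain rfl : t = 1 := by
          have : s * t = s * 1 := by linarith
          exact mul_left_cancel₀ hs.ne' this
        by_cases d : x₂ = 1
        · subst d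
          refine ⟨j, k, i, hjk, hij.symm, hik.symm, (1 - x₁)⁻¹,
            (one_le_inv₀ (by linarith)).2 (by linarith), ?_⟩
          have : (⟨1, 0⟩ : ℂ) + (1 - x₁)⁻¹ • (⟨x₁, 0⟩ - ⟨1, 0⟩) = ⟨0, 0⟩ := by
            have : 1 - x₁ ≠ 0 := by linarith
            rw [add_smul_mk_sub]
            apply Complex.ext
            · simp only; field_simp; ring
            · simp
          rw [hi, hj, hk, this]
          ext z; simp; tauto
        · rw [one_mul, one_mul] at hk
          exact (hT.false_of_leg_interior hcs hs hij hik hjk hi hj hk a' hx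
            (lt_of_le_of_ne hj1 d)).elim
      · obtain rfl := tb.resolve_right b
        refine (hT.false_of_base_vertex hcs hs hij hik hjk hi hj hk a' hx ht0
          (lt_of_le_of_ne ht1 ?_)).elim
        rintro rfl
        exact b (by ring)
  · have r' : c * y₃ < s * x₃ := lt_of_le_of_ne (by linarith) (Ne.symm r)
    obtain rfl := tr.resolve_right r
    rcases le_or_gt 0 c with hc | hc
    · exact (hT.false_of_apex_acute hcs hs hij hik hjk hi hj hk hx hj1 hy hn hc r').elim
    by_cases b : s * (1 - x₃) = (1 - c) * y₃
    · by_cases d : x₂ = 1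
      · subst d
        refine ⟨j, i, k, hij.symm, hjk, hik, s / y₃, (one_le_div hy).2 hys, ?_⟩
        have : (⟨1, 0⟩ : ℂ) + (s / y₃) • (⟨x₃, y₃⟩ - ⟨1, 0⟩) = ⟨c, s⟩ := by
          rw [add_smul_mk_sub]
          apply Complex.ext
          · simp only; field_simp; linarith
          · simp only; field_simp; ring
        rw [hi, hj, hk, this]
        exact Set.insert_comm _ _ _
      · exact (hT.false_of_apex_obtuse_of_base hcs hs hij hik hjk hi hj hk hx
          (lt_of_le_of_ne hj1 d) hy hc r' b).elim
    · obtain rfl := tb.resolve_right b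
      exact (hT.false_of_apex_obtuse_of_leg hcs hs hij hik hjk hi hj hk hy hn hc
        (lt_of_le_of_ne (by linarith) (Ne.symm b))).elim

lemma Optimal.sharesSideAndAngle_of_left {S P R : ℂ} {T : Fin 3 → ℂ} (h : Optimal S P R T)
    (hT : Nondegenerate T) {i j : Fin 3} (hij : i ≠ j) (hi : signedArea S P (T i) = 0)
    (hj : signedArea S P (T j) = 0) : SharesSideAndAngle S P R T := by
  obtain ⟨k, hik, hjk⟩ := exists_third hij
  have hpos := h.1.pos
  set e : ℂ := P - S with he
  have he0 : e ≠ 0 := by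
    intro h0
    have : P = S := sub_eq_zero.1 h0
    rw [this] at hpos
    simp [signedArea, cross] at hpos
  set v : ℂ := -(e⁻¹ * S) with hv
  refine SharesSideAndAngle.of_similarity (w := e⁻¹) (v := v) (inv_ne_zero he0) ?_
  have hS : e⁻¹ * S + v = ⟨0, 0⟩ := by
    have : (⟨0, 0⟩ : ℂ) = 0 := by apply Complex.ext <;> simp
    rw [this, hv]; ring
  have hP : e⁻¹ * P + v = ⟨1, 0⟩ := by
    have : (⟨1, 0⟩ : ℂ) = 1 := by apply Complex.ext <;> simp
    rw [this, hv]; field_simp; rw [he]; ring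
  have hO := h.similarity (inv_ne_zero he0) v
  have hN := hT.similarity (inv_ne_zero he0) v
  have si : signedArea (e⁻¹ * S + v) (e⁻¹ * P + v) (e⁻¹ * T i + v) = 0 := by
    rw [signedArea_similarity, hi, mul_zero]
  have sj : signedArea (e⁻¹ * S + v) (e⁻¹ * P + v) (e⁻¹ * T j + v) = 0 := by
    rw [signedArea_similarity, hj, mul_zero]
  rw [hS, hP] at hO si sj ⊢
  generalize e⁻¹ * R + v = R' at *
  generalize hT' : (fun i => e⁻¹ * T i + v) = T' at *
  have ei : e⁻¹ * T i + v = T' i := by rw [← hT']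
  have ej : e⁻¹ * T j + v = T' j := by rw [← hT']
  rw [ei] at si
  rw [ej] at sj
  have hcs : R'.re ^ 2 + R'.im ^ 2 = 1 := by
    have := hO.1.iso
    simp [Complex.normSq_apply] at this
    linarith
  have hs : 0 < R'.im := by
    have hpos' := hO.1.pos
    simp [signedArea, cross] at hpos'; linarith
  have hi' : T' i = ⟨(T' i).re, 0⟩ := by
    simp [signedArea, cross] at si
    apply Complex.ext
    · rfl
    · simp; linarith
  have hj' : T' j = ⟨(T' j).re, 0⟩ := by
    simp [signedArea, cross] at sj
    apply Complex.ext
    · rfl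
    · simp; linarith
  have hk' : T' k = ⟨(T' k).re, (T' k).im⟩ := rfl
  have hn := hN i j k hij hik hjk
  rw [hi', hj', hk'] at hn
  simp [signedArea, cross] at hn
  have hy : (T' k).im ≠ 0 := fun e => hn.2 e
  have hx : (T' j).re - (T' i).re ≠ 0 := fun e => hn.1 e
  rcases lt_or_gt_of_ne (sub_ne_zero.1 hx) with hlt | hlt
  · exact hO.sharesSideAndAngle_of_leg_aux hcs hs hij.symm hjk hik hj' hi' hk' hlt hy
  · exact hO.sharesSideAndAngle_of_leg_aux hcs hs hij hik hjk hi' hj' hk' hlt hy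

/-- A minimum area isosceles container of a triangle shares a side and an angle with it. -/
theorem Optimal.sharesSideAndAngle {S P R : ℂ} {T : Fin 3 → ℂ} (h : Optimal S P R T)
    (hT : Nondegenerate T) : SharesSideAndAngle S P R T := by
  obtain ⟨i, j, hij, ⟨hi, hj⟩ | ⟨hi, hj⟩ | ⟨hi, hj⟩⟩ := h.exists_flush
  · exact h.sharesSideAndAngle_of_left hT hij hi hj
  · exact h.sharesSideAndAngle_of_base hT hij hi hj
  · have key := h.conj.sharesSideAndAngle_of_left hT.conj hij
      (by rw [signedArea_conj, signedArea_swap, hi]; simp)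
      (by rw [signedArea_conj, signedArea_swap, hj]; simp)
    have key2 := SharesSideAndAngle.of_map (f := starRingEnd ℂ) (RingHom.injective _)
      (fun x y r => by simp [Complex.real_smul]) key
    obtain ⟨a, b, d, h1, h2, h3, r, hr, hs⟩ := key2
    exact ⟨a, b, d, h1, h2, h3, r, hr, by rw [← hs, Set.pair_comm]⟩

/-- The identification of the Euclidean plane with the complex plane. -/
def toComplex (p : Pt) : ℂ := ⟨p 0, p 1⟩

/-- The inverse of `toComplex`. -/
def ofComplex (z : ℂ) : Pt := !₂[z.re, z.im]

@[simp] lemma toComplex_ofComplex (z : ℂ) : toComplex (ofComplex z) = z := by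
  simp [toComplex, ofComplex]

lemma toComplex_injective : Function.Injective toComplex := by
  intro p q h
  ext i
  fin_cases i
  · exact congrArg Complex.re h
  · exact congrArg Complex.im h

lemma toComplex_add_smul_sub (x y : Pt) (r : ℝ) :
    toComplex (x + r • (y - x)) = toComplex x + r • (toComplex y - toComplex x) := by
  apply Complex.ext <;> simp [toComplex]

lemma dist_sq_eq (p q : Pt) : dist p q ^ 2 = (p 0 - q 0) ^ 2 + (p 1 - q 1) ^ 2 := by
  rw [EuclideanSpace.dist_eq, Real.sq_sqrt (by positivity)]
  simp [Real.dist_eq, sq_abs]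

lemma normSq_toComplex_sub (p q : Pt) :
    Complex.normSq (toComplex p - toComplex q) = dist q p ^ 2 := by
  rw [dist_sq_eq]
  simp [toComplex, Complex.normSq_apply]
  ring

/-- Twice the signed area of the triangle with vertices `S`, `P`, `R`. -/
def orientedArea (S P R : Pt) : ℝ := signedArea (toComplex S) (toComplex P) (toComplex R)

lemma orientedArea_eq (S P R : Pt) :
    orientedArea S P R = (P 0 - S 0) * (R 1 - S 1) - (P 1 - S 1) * (R 0 - S 0) := by
  simp [orientedArea, signedArea, cross, toComplex]

lemma orientedArea_rotate (S P R : Pt) : orientedArea P R S = orientedArea S P R :=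
  signedArea_rotate _ _ _

lemma orientedArea_swap_right (S P R : Pt) : orientedArea S R P = -orientedArea S P R :=
  signedArea_swap_right _ _ _

lemma orientedArea_add_smul_sub (X Y Z : Pt) (r : ℝ) :
    orientedArea X Y (X + r • (Z - X)) = r * orientedArea X Y Z := by
  simp [orientedArea_eq]; ring

lemma affineIndependent_iff_orientedArea_ne_zero (S P R : Pt) :
    AffineIndependent ℝ ![S, P, R] ↔ orientedArea S P R ≠ 0 := by
  rw [affineIndependent_iff_linearIndependent_vsub ℝ _ (0 : Fin 3)]
  have e : (fun i : {x : Fin 3 // x ≠ 0} => (![S, P, R] i -ᵥ ![S, P, R] 0 : Pt)) =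
      ![P - S, R - S] ∘ (finSuccAboveEquiv (0 : Fin 3)).symm := by
    funext ⟨i, hi⟩
    fin_cases i
    · exact absurd rfl hi
    · rfl
    · rfl
  rw [e, linearIndependent_equiv, LinearIndependent.pair_iff, orientedArea_eq]
  constructor
  · intro h h0
    have h1 := h (R 1 - S 1) (-(P 1 - S 1)) (by
      ext i; fin_cases i <;> simp <;> linarith)
    have h2 := h (R 0 - S 0) (-(P 0 - S 0)) (by
      ext i; fin_cases i <;> simp <;> linarith)
    have h3 := h 1 0 (by
      ext i; fin_cases i <;> simp <;> linarith [h1.2, h2.2])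
    exact one_ne_zero h3.1
  · intro h s t hst
    have h0 := congrArg (fun p : Pt => p 0) hst
    have h1 := congrArg (fun p : Pt => p 1) hst
    simp at h0 h1
    constructor
    · refine (mul_eq_zero.1 ?_).resolve_right h
      linear_combination (R 1 - S 1) * h0 - (R 0 - S 0) * h1
    · refine (mul_eq_zero.1 ?_).resolve_right h
      linear_combination (P 0 - S 0) * h1 - (P 1 - S 1) * h0

lemma convex_orientedArea_nonneg (X Y : Pt) : Convex ℝ {x | 0 ≤ orientedArea X Y x} := by
  intro p hp q hq a b ha hb hab
  simp only [Set.mem_ofPred_eq, orientedArea_eq] at *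
  have : b = 1 - a := by linarith
  subst this
  simp only [PiLp.add_apply, PiLp.smul_apply, smul_eq_mul]
  nlinarith [mul_nonneg ha hp, mul_nonneg hb hq]

lemma tri_subset_orientedArea_nonneg {S P R : Pt} (h : 0 < orientedArea S P R) :
    tri S P R ⊆ {x | 0 ≤ orientedArea S P x} := by
  refine convexHull_min ?_ (convex_orientedArea_nonneg S P)
  rintro x (rfl | rfl | rfl)
  · simp [orientedArea_eq]
  · simp [orientedArea_eq, mul_comm]
  · exact h.le

lemma tri_rotate (S P R : Pt) : tri P R S = tri S P R := by
  unfold tri; congr 1; ext; simp; tauto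

lemma tri_swap_right (S P R : Pt) : tri S R P = tri S P R := by
  unfold tri; congr 1; ext; simp; tauto

lemma mem_tri_iff {S P R x : Pt} (h : 0 < orientedArea S P R) :
    x ∈ tri S P R ↔
      0 ≤ orientedArea S P x ∧ 0 ≤ orientedArea P R x ∧ 0 ≤ orientedArea R S x := by
  constructor
  · intro hx
    refine ⟨tri_subset_orientedArea_nonneg h hx, ?_, ?_⟩
    · exact tri_subset_orientedArea_nonneg (R := S) (by rwa [orientedArea_rotate])
        (by rwa [tri_rotate])
    · exact tri_subset_orientedArea_nonneg (R := P)
        (by rwa [orientedArea_rotate, orientedArea_rotate]) (by rwa [tri_rotate, tri_rotate])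
  · rintro ⟨h1, h2, h3⟩
    set D := orientedArea S P R with hD
    have key := (convex_convexHull ℝ ({S, P, R} : Set Pt)).sum_mem (t := Finset.univ)
      (w := ![orientedArea P R x / D, orientedArea R S x / D, orientedArea S P x / D])
      (z := ![S, P, R]) ?_ ?_ ?_
    · have e : tri S P R = convexHull ℝ {S, P, R} := rfl
      rw [e]
      convert key using 1
      rw [Fin.sum_univ_three]
      ext i
      fin_cases i <;> simp <;> field_simp <;> rw [hD] <;> simp only [orientedArea_eq] <;> ring
    · intro i _
      fin_cases i <;> simp <;> positivity
    · rw [Fin.sum_univ_three]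
      simp
      field_simp
      rw [hD]; simp only [orientedArea_eq]; ring
    · intro i _
      apply subset_convexHull
      fin_cases i <;> simp

/-- The linear map sending the standard basis to `u`, `w`. -/
def basisMap (u w : Pt) : Pt →ₗ[ℝ] Pt where
  toFun x := x 0 • u + x 1 • w
  map_add' x y := by simp [add_smul]; abel
  map_smul' r x := by simp [mul_smul]

lemma det_basisMap (u w : Pt) : LinearMap.det (basisMap u w) = u 0 * w 1 - u 1 * w 0 := by
  rw [← LinearMap.det_toMatrix (EuclideanSpace.basisFun (Fin 2) ℝ).toBasis, Matrix.det_fin_two]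
  simp [LinearMap.toMatrix_apply, basisMap]
  ring

open scoped Pointwise in
lemma tri_eq_image (S P R : Pt) :
    tri S P R = (fun x => S + x) ''
      (basisMap (P - S) (R - S) '' tri 0 (ofComplex 1) (ofComplex Complex.I)) := by
  unfold tri
  rw [(basisMap (P - S) (R - S)).image_convexHull]
  have := convexHull_vadd (𝕜 := ℝ) S
    (basisMap (P - S) (R - S) '' {0, ofComplex 1, ofComplex Complex.I})
  have e : ∀ s : Set Pt, (fun x => S + x) '' s = S +ᵥ s := fun s => rfl
  rw [e, ← this, ← e]
  congr 1
  simp [Set.image_insert_eq, basisMap, ofComplex]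

lemma exists_triArea_eq : ∃ κ : ℝ, 0 < κ ∧ ∀ S P R : Pt,
    triArea S P R = |orientedArea S P R| * κ := by
  refine ⟨triArea 0 (ofComplex 1) (ofComplex Complex.I), ?_, fun S P R => ?_⟩
  · have hD : 0 < orientedArea 0 (ofComplex 1) (ofComplex Complex.I) := by
      simp [orientedArea_eq, ofComplex]
    refine ENNReal.toReal_pos ?_ ?_
    · have hind := (affineIndependent_iff_orientedArea_ne_zero _ _ _).2 hD.ne'
      have hi : (interior (tri 0 (ofComplex 1) (ofComplex Complex.I))).Nonempty := by
        refine interior_convexHull_nonempty_iff_affineSpan_eq_top.2 ?_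
        have hr : ({0, ofComplex 1, ofComplex Complex.I} : Set Pt) =
            Set.range ![0, ofComplex 1, ofComplex Complex.I] := by
          ext; simp; tauto
        rw [hr]
        exact hind.affineSpan_eq_top_iff_card_eq_finrank_add_one.2 (by simp)
      exact (Measure.measure_pos_of_nonempty_interior _ hi).ne'
    · have : IsCompact (tri 0 (ofComplex 1) (ofComplex Complex.I)) :=
        (Set.toFinite {0, ofComplex 1, ofComplex Complex.I}).isCompact_convexHull ℝ
      exact this.measure_lt_top.ne
  · unfold triArea
    conv_lhs => rw [tri_eq_image S P R]
    rw [Set.image_add_left, measure_preimage_add, Measure.addHaar_image_linearMap,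
      det_basisMap, ENNReal.toReal_mul, ENNReal.toReal_ofReal (abs_nonneg _), orientedArea_eq]
    simp

lemma isIsosceles_iff_exists_apex (S P R : Pt) : IsIsosceles S P R ↔
    dist S P = dist S R ∨ dist P R = dist P S ∨ dist R S = dist R P := by
  unfold IsIsosceles
  rw [dist_comm R S, dist_comm R P, dist_comm P S]
  constructor <;> rintro (h | h | h) <;> simp [h]

lemma tri_subset_iff {A B C S P R : Pt} :
    tri A B C ⊆ tri S P R ↔ ∀ i, ![A, B, C] i ∈ tri S P R := by
  constructor
  · intro h i
    apply h
    apply subset_convexHull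
    fin_cases i <;> simp
  · intro h
    refine convexHull_min ?_ (convex_convexHull ℝ _)
    rintro x (rfl | rfl | rfl)
    exacts [h 0, h 1, h 2]

lemma encloses_iff {A B C S P R : Pt} :
    Encloses (toComplex S) (toComplex P) (toComplex R) (fun i => toComplex (![A, B, C] i)) ↔
      0 < orientedArea S P R ∧ dist S P = dist S R ∧ tri A B C ⊆ tri S P R := by
  have hd : Complex.normSq (toComplex P - toComplex S) =
      Complex.normSq (toComplex R - toComplex S) ↔ dist S P = dist S R := by
    rw [normSq_toComplex_sub, normSq_toComplex_sub, sq_eq_sq₀ dist_nonneg dist_nonneg]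
  constructor
  · intro h
    refine ⟨h.pos, hd.1 h.iso, tri_subset_iff.2 fun i => (mem_tri_iff h.pos).2 ?_⟩
    exact ⟨h.left i, h.base i, h.right i⟩
  · rintro ⟨h1, h2, h3⟩
    have h4 := fun i => (mem_tri_iff h1).1 (tri_subset_iff.1 h3 i)
    exact ⟨h1, hd.2 h2, fun i => (h4 i).1, fun i => (h4 i).2.1, fun i => (h4 i).2.2⟩

lemma sharesSideAndAngle_of_apex {A B C S P R : Pt} (hABC : AffineIndependent ℝ ![A, B, C])
    (h : IsMinIsoscelesContainer A B C S P R) (hpos : 0 < orientedArea S P R)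
    (hiso : dist S P = dist S R) : SharesSideAndAngle S P R ![A, B, C] := by
  refine SharesSideAndAngle.of_map toComplex_injective toComplex_add_smul_sub ?_
  refine Optimal.sharesSideAndAngle ⟨encloses_iff.2 ⟨hpos, hiso, h.1.2.2⟩, ?_⟩ ?_
  · intro S' P' R' h'
    rw [← toComplex_ofComplex S', ← toComplex_ofComplex P', ← toComplex_ofComplex R'] at h' ⊢
    obtain ⟨h1, h2, h3⟩ := encloses_iff.1 h'
    obtain ⟨κ, hκ, harea⟩ := exists_triArea_eq
    have := h.2 _ _ _ ⟨(affineIndependent_iff_orientedArea_ne_zero _ _ _).2 h1.ne',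
      (isIsosceles_iff_exists_apex _ _ _).2 (Or.inl h2), h3⟩
    rw [harea, harea, mul_le_mul_iff_left₀ hκ, abs_of_pos hpos, abs_of_pos h1] at this
    exact this
  · have h0 := (affineIndependent_iff_orientedArea_ne_zero A B C).1 hABC
    have h1 : orientedArea B C A ≠ 0 := by rwa [orientedArea_rotate]
    have h2 : orientedArea C A B ≠ 0 := by rwa [orientedArea_rotate]
    have h3 : orientedArea A C B ≠ 0 := by rwa [orientedArea_swap_right, neg_ne_zero]
    have h4 : orientedArea B A C ≠ 0 := by rwa [orientedArea_swap_right, neg_ne_zero]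
    have h5 : orientedArea C B A ≠ 0 := by rwa [orientedArea_swap_right, neg_ne_zero]
    intro i j k hij hik hjk
    fin_cases i <;> fin_cases j <;> fin_cases k <;> simp at hij hik hjk ⊢ <;> assumption

lemma IsIsosceles.rotate {S P R : Pt} (h : IsIsosceles S P R) : IsIsosceles P R S := by
  unfold IsIsosceles at *; tauto

lemma IsIsosceles.swap_right {S P R : Pt} (h : IsIsosceles S P R) : IsIsosceles S R P := by
  rw [isIsosceles_iff_exists_apex] at *
  rcases h with h | h | h <;> simp [h]

lemma IsMinIsoscelesContainer.rotate {A B C S P R : Pt}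
    (h : IsMinIsoscelesContainer A B C S P R) : IsMinIsoscelesContainer A B C P R S := by
  obtain ⟨⟨h1, h2, h3⟩, h4⟩ := h
  refine ⟨⟨?_, h2.rotate, by rwa [tri_rotate S P R]⟩, fun S' P' R' h' => ?_⟩
  · rw [affineIndependent_iff_orientedArea_ne_zero] at *
    rwa [orientedArea_rotate]
  · unfold triArea; rw [tri_rotate]; exact h4 S' P' R' h'

lemma IsMinIsoscelesContainer.swap_right {A B C S P R : Pt}
    (h : IsMinIsoscelesContainer A B C S P R) : IsMinIsoscelesContainer A B C S R P := by
  obtain ⟨⟨h1, h2, h3⟩, h4⟩ := h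
  refine ⟨⟨?_, h2.swap_right, by rwa [tri_swap_right S P R]⟩, fun S' P' R' h' => ?_⟩
  · rw [affineIndependent_iff_orientedArea_ne_zero] at *
    rwa [orientedArea_swap_right, neg_ne_zero]
  · unfold triArea; rw [tri_swap_right]; exact h4 S' P' R' h'

lemma SharesSideAndAngle.rotate {S P R : Pt} {T : Fin 3 → Pt} (h : SharesSideAndAngle S P R T) :
    SharesSideAndAngle P R S T := by
  obtain ⟨i, j, k, h1, h2, h3, r, hr, hs⟩ := h
  refine ⟨i, j, k, h1, h2, h3, r, hr, ?_⟩
  rw [← hs]; ext; simp; tauto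

lemma SharesSideAndAngle.swap_right {S P R : Pt} {T : Fin 3 → Pt}
    (h : SharesSideAndAngle S P R T) : SharesSideAndAngle S R P T := by
  obtain ⟨i, j, k, h1, h2, h3, r, hr, hs⟩ := h
  exact ⟨i, j, k, h1, h2, h3, r, hr, by rw [← hs, Set.pair_comm]⟩

/-- A minimum area isosceles container of a triangle shares a side and an angle with it. -/
theorem IsMinIsoscelesContainer.sharesSideAndAngle {A B C S P R : Pt}
    (hABC : AffineIndependent ℝ ![A, B, C]) (h : IsMinIsoscelesContainer A B C S P R) :
    SharesSideAndAngle S P R ![A, B, C] := by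
  have apex : ∀ {S P R : Pt}, IsMinIsoscelesContainer A B C S P R → dist S P = dist S R →
      SharesSideAndAngle S P R ![A, B, C] := by
    intro S P R h hd
    rcases lt_or_gt_of_ne ((affineIndependent_iff_orientedArea_ne_zero _ _ _).1 h.1.1) with h0 | h0
    · refine (sharesSideAndAngle_of_apex hABC h.swap_right ?_ hd.symm).swap_right
      rw [orientedArea_swap_right]; linarith
    · exact sharesSideAndAngle_of_apex hABC h h0 hd
  rcases (isIsosceles_iff_exists_apex _ _ _).1 h.1.2.1 with hd | hd | hd
  · exact apex h hd
  · exact (apex h.rotate hd).rotate.rotate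
  · exact (apex h.rotate.rotate hd).rotate

lemma dist_add_smul_sub {X Z : Pt} {r : ℝ} (hr : 0 ≤ r) :
    dist X (X + r • (Z - X)) = r * dist X Z := by
  rw [dist_self_add_right, norm_smul, Real.norm_of_nonneg hr, dist_eq_norm_sub']

/-- Stewart's theorem. -/
lemma dist_add_smul_sub_sq (X Y Z : Pt) (r : ℝ) : dist Y (X + r • (Z - X)) ^ 2 =
    (1 - r) * dist X Y ^ 2 + r * dist Y Z ^ 2 - r * (1 - r) * dist X Z ^ 2 := by
  simp only [dist_sq_eq, PiLp.add_apply, PiLp.smul_apply, PiLp.sub_apply, smul_eq_mul]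
  ring

lemma OnRay.exists_eq {X Y Z : Pt} (h : OnRay X Y Z) (hne : X ≠ Y) :
    ∃ r : ℝ, 0 ≤ r ∧ Z = X + r • (Y - X) := by
  obtain ⟨r, hr, he⟩ := SameRay.exists_nonneg_left h (sub_ne_zero.2 hne.symm)
  exact ⟨r, hr, by rw [he]; abel⟩

lemma isIsoscelesContainer_extend {X Y Z : Pt} {r : ℝ} (hr : 1 ≤ r)
    (hind : orientedArea X Y Z ≠ 0) (hiso : IsIsosceles X Y (X + r • (Z - X))) :
    IsIsoscelesContainer X Y Z X Y (X + r • (Z - X)) := by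
  have hr0 : 0 < r := by linarith
  refine ⟨?_, hiso, tri_subset_iff.2 ?_⟩
  · rw [affineIndependent_iff_orientedArea_ne_zero, orientedArea_add_smul_sub]
    exact mul_ne_zero hr0.ne' hind
  · have hmem : ∀ p ∈ ({X, Y, X + r • (Z - X)} : Set Pt), p ∈ tri X Y (X + r • (Z - X)) :=
      fun p hp => subset_convexHull ℝ _ hp
    have hZ : Z ∈ tri X Y (X + r • (Z - X)) := by
      have := (convex_convexHull ℝ ({X, Y, X + r • (Z - X)} : Set Pt)) (hmem X (by simp))
        (hmem (X + r • (Z - X)) (by simp)) (a := 1 - r⁻¹) (b := r⁻¹)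
        (by have := inv_le_one_of_one_le₀ hr; linarith) (by positivity) (by ring)
      have e : (1 - r⁻¹) • X + r⁻¹ • (X + r • (Z - X)) = Z := by
        rw [smul_add, smul_smul, inv_mul_cancel₀ hr0.ne', sub_smul, one_smul, one_smul]
        abel
      rwa [e] at this
    intro i
    fin_cases i
    · exact hmem X (by simp)
    · exact hmem Y (by simp)
    · exact hZ

lemma dist_eq_of_set_eq {S P R X Y W : Pt} (hind : AffineIndependent ℝ ![S, P, R])
    (hiso : IsIsosceles S P R) (hs : ({S, P, R} : Set Pt) = {X, Y, W}) :
    dist X Y = dist X W ∨ dist Y X = dist Y W ∨ dist W X = dist W Y := by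
  have key : ∀ {x y z : Pt}, x ∈ ({X, Y, W} : Set Pt) → y ∈ ({X, Y, W} : Set Pt) →
      z ∈ ({X, Y, W} : Set Pt) → x ≠ y → x ≠ z → y ≠ z → dist x y = dist x z →
      dist X Y = dist X W ∨ dist Y X = dist Y W ∨ dist W X = dist W Y := by
    rintro x y z (rfl | rfl | rfl) (rfl | rfl | rfl) (rfl | rfl | rfl) h1 h2 h3 h <;>
      first
      | exact absurd rfl h1
      | exact absurd rfl h2
      | exact absurd rfl h3
      | simp [h]
  have hi := hind.injective
  have h1 : S ≠ P := fun e => absurd (hi (a₁ := 0) (a₂ := 1) e) (by decide)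
  have h2 : S ≠ R := fun e => absurd (hi (a₁ := 0) (a₂ := 2) e) (by decide)
  have h3 : P ≠ R := fun e => absurd (hi (a₁ := 1) (a₂ := 2) e) (by decide)
  have mS : S ∈ ({X, Y, W} : Set Pt) := by simp [← hs]
  have mP : P ∈ ({X, Y, W} : Set Pt) := by simp [← hs]
  have mR : R ∈ ({X, Y, W} : Set Pt) := by simp [← hs]
  rcases (isIsosceles_iff_exists_apex _ _ _).1 hiso with h | h | h
  · exact key mS mP mR h1 h2 h3 h
  · exact key mP mR mS h3 h1.symm h2.symm h
  · exact key mR mS mP h2.symm h3.symm h1 h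

/-- The relations between the side lengths `s = XY`, `r = XZ`, `q = YZ` and the ratio `t` for
which `X`, `Y`, `X + t (Z - X)` form an isosceles triangle. -/
lemma ratio_of_isosceles {X Y Z : Pt} {t : ℝ} (ht : 1 ≤ t)
    (h : dist X Y = dist X (X + t • (Z - X)) ∨ dist Y X = dist Y (X + t • (Z - X)) ∨
      dist (X + t • (Z - X)) X = dist (X + t • (Z - X)) Y) :
    t * dist X Z = dist X Y ∨
      t * dist X Z ^ 2 = dist X Y ^ 2 + dist X Z ^ 2 - dist Y Z ^ 2 ∨
      dist X Y ^ 2 = t * (dist X Y ^ 2 + dist X Z ^ 2 - dist Y Z ^ 2) := by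
  have ht0 : 0 < t := by linarith
  have hst := dist_add_smul_sub_sq X Y Z t
  rcases h with h | h | h
  · left; rw [h, dist_add_smul_sub ht0.le]
  · right; left
    rw [← h, dist_comm Y X] at hst
    refine mul_left_cancel₀ ht0.ne' ?_
    linear_combination -hst
  · right; right
    rw [dist_comm _ Y, dist_comm _ X, dist_add_smul_sub ht0.le] at h
    rw [← h] at hst
    linear_combination -hst

lemma abs_orientedArea_perm (A B C : Pt) {i j k : Fin 3} (hij : i ≠ j) (hik : i ≠ k)
    (hjk : j ≠ k) : |orientedArea (![A, B, C] i) (![A, B, C] j) (![A, B, C] k)| =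
      |orientedArea A B C| := by
  have h1 : |orientedArea B C A| = |orientedArea A B C| := by rw [orientedArea_rotate]
  have h2 : |orientedArea C A B| = |orientedArea A B C| := by rw [← orientedArea_rotate C A B]
  have h3 : |orientedArea A C B| = |orientedArea A B C| := by
    rw [orientedArea_swap_right, abs_neg]
  have h4 : |orientedArea B A C| = |orientedArea A B C| := by
    rw [orientedArea_swap_right, abs_neg, h1]
  have h5 : |orientedArea C B A| = |orientedArea A B C| := by
    rw [orientedArea_swap_right, abs_neg, h2]
  fin_cases i <;> fin_cases j <;> fin_cases k <;> simp at hij hik hjk ⊢ <;> assumption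

/-- A minimum area isosceles container sharing a side and an angle with the triangle has at most
the area of every other isosceles container of this kind. -/
lemma IsMinIsoscelesContainer.ratio_le {A B C S P R : Pt}
    (hABC : AffineIndependent ℝ ![A, B, C]) (h : IsMinIsoscelesContainer A B C S P R)
    {i j k i' j' k' : Fin 3} (hij : i ≠ j) (hik : i ≠ k) (hjk : j ≠ k)
    (hij' : i' ≠ j') (hik' : i' ≠ k') (hjk' : j' ≠ k') {t r : ℝ} (ht : 0 ≤ t) (hr : 1 ≤ r)
    (hs : ({S, P, R} : Set Pt) = {![A, B, C] i, ![A, B, C] j,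
      ![A, B, C] i + t • (![A, B, C] k - ![A, B, C] i)})
    (hiso : IsIsosceles (![A, B, C] i') (![A, B, C] j')
      (![A, B, C] i' + r • (![A, B, C] k' - ![A, B, C] i'))) : t ≤ r := by
  obtain ⟨κ, hκ, harea⟩ := exists_triArea_eq
  have hD : 0 < |orientedArea A B C| :=
    abs_pos.2 ((affineIndependent_iff_orientedArea_ne_zero _ _ _).1 hABC)
  have e1 : triArea S P R = t * |orientedArea A B C| * κ := by
    have : tri S P R = tri (![A, B, C] i) (![A, B, C] j)
        (![A, B, C] i + t • (![A, B, C] k - ![A, B, C] i)) := by unfold tri; rw [hs]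
    unfold triArea; rw [this]
    refine (harea _ _ _).trans ?_
    rw [orientedArea_add_smul_sub, abs_mul, abs_of_nonneg ht,
      abs_orientedArea_perm A B C hij hik hjk]
  have hD' : orientedArea (![A, B, C] i') (![A, B, C] j') (![A, B, C] k') ≠ 0 := by
    rw [← abs_pos, abs_orientedArea_perm A B C hij' hik' hjk']; exact hD
  have hc := isIsoscelesContainer_extend hr hD' hiso
  have htri : tri (![A, B, C] i') (![A, B, C] j') (![A, B, C] k') = tri A B C := by
    unfold tri
    congr 1
    ext x
    have := eq_or_eq_or_eq_of_ne hij' hik' hjk'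
    constructor
    · have hm : ∀ l, ![A, B, C] l ∈ ({A, B, C} : Set Pt) := by
        intro l; fin_cases l <;> simp
      rintro (rfl | rfl | rfl) <;> exact hm _
    · have hm : ∀ l, ![A, B, C] l ∈ ({![A, B, C] i', ![A, B, C] j', ![A, B, C] k'} : Set Pt) := by
        intro l
        rcases this l with rfl | rfl | rfl <;> simp
      rintro (rfl | rfl | rfl)
      exacts [hm 0, hm 1, hm 2]
  have e2 := h.2 _ _ _ ⟨hc.1, hc.2.1, htri ▸ hc.2.2⟩
  rw [e1, harea, orientedArea_add_smul_sub, abs_mul, abs_of_nonneg (by linarith : (0 : ℝ) ≤ r),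
    abs_orientedArea_perm A B C hij' hik' hjk', mul_le_mul_iff_left₀ hκ,
    mul_le_mul_iff_left₀ hD] at e2
  exact e2

section SideLengths

variable {a b c t : ℝ}

lemma ratio_eq_of_large_middle (ha : 0 < a) (hab : a < b) (hbc : b < c) (ht : 1 ≤ t)
    (tvb : t * b ≤ c)
    (h : t * b = c ∨ t * b ^ 2 = c ^ 2 + b ^ 2 - a ^ 2 ∨ c ^ 2 = t * (c ^ 2 + b ^ 2 - a ^ 2)) :
    t * b = c := by
  have sab : a ^ 2 < b ^ 2 := by gcongr
  have hb : 0 < b := ha.trans hab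
  rcases h with h | h | h
  · exact h
  · have h1 := mul_le_mul_of_nonneg_right tvb hb.le
    have h2 : 0 < c * (c - b) := mul_pos (by linarith) (by linarith)
    linarith [h1, h2, sab, h]
  · have h1 := mul_le_mul_of_nonneg_right ht (by nlinarith : 0 ≤ c ^ 2 + b ^ 2 - a ^ 2)
    linarith

lemma ratio_eq_of_middle_large (ha : 0 < a) (hab : a < b) (hbc : b < c) (ht : 1 ≤ t)
    (h : t * c = b ∨ t * c ^ 2 = b ^ 2 + c ^ 2 - a ^ 2 ∨ b ^ 2 = t * (b ^ 2 + c ^ 2 - a ^ 2)) :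
    t * c ^ 2 = b ^ 2 + c ^ 2 - a ^ 2 := by
  rcases h with h | h | h
  · nlinarith
  · exact h
  · have h1 := mul_le_mul_of_nonneg_right ht (by nlinarith : 0 ≤ b ^ 2 + c ^ 2 - a ^ 2)
    nlinarith

lemma ratio_eq_of_middle_small (ha : 0 < a) (hab : a < b) (hbc : b < c) (ht : 1 ≤ t)
    (tua : t * a ≤ b)
    (h : t * a = b ∨ t * a ^ 2 = b ^ 2 + a ^ 2 - c ^ 2 ∨ b ^ 2 = t * (b ^ 2 + a ^ 2 - c ^ 2)) :
    t * a = b := by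
  have hb : 0 < b := ha.trans hab
  have sbc : b ^ 2 < c ^ 2 := by gcongr
  rcases h with h | h | h
  · exact h
  · nlinarith
  · have hv : 0 < b ^ 2 + a ^ 2 - c ^ 2 := by
      refine pos_of_mul_pos_right (a := t) ?_ (by linarith)
      rw [← h]; positivity
    have h1 := mul_le_mul_of_nonneg_right tua hv.le
    have h2 : b * (b * a) ≤ b * (b ^ 2 + a ^ 2 - c ^ 2) := by linear_combination h1 + a * h
    have h3 := le_of_mul_le_mul_left h2 hb
    nlinarith

lemma false_of_large_small (ha : 0 < a) (hab : a < b) (hbc : b < c) (tua : t * a ≤ b)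
    (tvb : t * b ≤ c) (twc : t * c ^ 2 ≤ b ^ 2 + c ^ 2 - a ^ 2)
    (h : t * a = c ∨ t * a ^ 2 = c ^ 2 + a ^ 2 - b ^ 2 ∨ c ^ 2 = t * (c ^ 2 + a ^ 2 - b ^ 2)) :
    False := by
  have hb : 0 < b := ha.trans hab
  have sab : a ^ 2 < b ^ 2 := by gcongr
  have sbc : b ^ 2 < c ^ 2 := by gcongr
  rcases h with h | h | h
  · linarith
  · have h1 := mul_le_mul_of_nonneg_right tvb (sq_nonneg a)
    have h2 : 0 < (c - b) * (b * (c + b) - a ^ 2) := by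
      apply mul_pos <;> nlinarith
    have h3 : b * (c ^ 2 + a ^ 2 - b ^ 2) ≤ c * a ^ 2 := by linear_combination h1 - b * h
    linarith
  · have hv : 0 < c ^ 2 + a ^ 2 - b ^ 2 := by nlinarith
    have h1 := mul_le_mul_of_nonneg_right twc hv.le
    have h2 : 0 < (b ^ 2 - a ^ 2) ^ 2 := by apply pow_pos; linarith
    have h3 : c ^ 2 * c ^ 2 ≤ (b ^ 2 + c ^ 2 - a ^ 2) * (c ^ 2 + a ^ 2 - b ^ 2) := by
      linear_combination h1 + c ^ 2 * h
    linarith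

lemma false_of_small_large (ha : 0 < a) (hab : a < b) (hbc : b < c) (ht : 1 ≤ t)
    (h : t * c = a ∨ t * c ^ 2 = a ^ 2 + c ^ 2 - b ^ 2 ∨ a ^ 2 = t * (a ^ 2 + c ^ 2 - b ^ 2)) :
    False := by
  have hb : 0 < b := ha.trans hab
  have sab : a ^ 2 < b ^ 2 := by gcongr
  have sbc : b ^ 2 < c ^ 2 := by gcongr
  rcases h with h | h | h
  · nlinarith
  · nlinarith
  · have h1 := mul_le_mul_of_nonneg_right ht (by nlinarith : 0 ≤ a ^ 2 + c ^ 2 - b ^ 2)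
    linarith

lemma false_of_small_middle (ha : 0 < a) (hab : a < b) (hbc : b < c) (ht : 1 ≤ t)
    (tvb : t * b ≤ c)
    (h : t * b = a ∨ t * b ^ 2 = a ^ 2 + b ^ 2 - c ^ 2 ∨ a ^ 2 = t * (a ^ 2 + b ^ 2 - c ^ 2)) :
    False := by
  have hb : 0 < b := ha.trans hab
  have sab : a ^ 2 < b ^ 2 := by gcongr
  rcases h with h | h | h
  · nlinarith
  · nlinarith
  · have hv : 0 < a ^ 2 + b ^ 2 - c ^ 2 := by
      refine pos_of_mul_pos_right (a := t) ?_ (by linarith)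
      rw [← h]; positivity
    have h1 := mul_le_mul_of_nonneg_right tvb hv.le
    have h2 : 0 < (c - b) * (c * (c + b) - a ^ 2) := by
      apply mul_pos <;> nlinarith
    have h3 : a ^ 2 * b ≤ c * (a ^ 2 + b ^ 2 - c ^ 2) := by linear_combination h1 + b * h
    linarith

end SideLengths

/-- every minimum area isosceles container of a triangle `A B C`
with side lengths `a < b < c` equals (as a convex set) one of the three
triangles `AB'C`, `ABC'`, `AB₁C`; in particular there are at most `3` distinct
minimum area isosceles containers, each a special container of the first or
second kind. -/
theorem statement4 (A B C B' C' B₁ : Pt)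
    (hABC : AffineIndependent ℝ ![A, B, C])
    (hab : dist B C < dist C A) (hbc : dist C A < dist A B)
    (hB'ray : OnRay C B B') (hB'dist : dist C B' = dist C A)
    (hC'ray : OnRay A C C') (hC'dist : dist A C' = dist A B)
    (hB₁ray : OnRay A B B₁) (hB₁ne : B₁ ≠ A) (hB₁dist : dist B₁ C = dist C A) :
    ∀ S P R : Pt, IsMinIsoscelesContainer A B C S P R →
      tri S P R = tri A B' C ∨ tri S P R = tri A B C' ∨
        tri S P R = tri A B₁ C := by
  intro S P R h
  obtain ⟨i, j, k, hij, hik, hjk, t, ht, hs⟩ := h.sharesSideAndAngle hABC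
  have hiso := ratio_of_isosceles ht (dist_eq_of_set_eq h.1.1 h.1.2.1 hs)
  have hAB : A ≠ B := fun e => absurd (hABC.injective (a₁ := 0) (a₂ := 1) e) (by decide)
  have hAC : A ≠ C := fun e => absurd (hABC.injective (a₁ := 0) (a₂ := 2) e) (by decide)
  have hBC : B ≠ C := fun e => absurd (hABC.injective (a₁ := 1) (a₂ := 2) e) (by decide)
  have ha : 0 < dist B C := dist_pos.2 hBC
  obtain ⟨u, hu0, rfl⟩ := hB'ray.exists_eq hBC.symm
  obtain ⟨v, hv0, rfl⟩ := hC'ray.exists_eq hAC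
  obtain ⟨w, hw0, rfl⟩ := hB₁ray.exists_eq hAB
  have hw : w ≠ 0 := by rintro rfl; simp at hB₁ne
  have hu : u * dist B C = dist C A := by
    rw [← hB'dist, dist_add_smul_sub hu0, dist_comm B C]
  have hv : v * dist C A = dist A B := by
    rw [← hC'dist, dist_add_smul_sub hv0, dist_comm A C]
  have hw' : w * dist A B ^ 2 = dist C A ^ 2 + dist A B ^ 2 - dist B C ^ 2 := by
    have hst := dist_add_smul_sub_sq A C B w
    rw [dist_comm C (A + _), hB₁dist, dist_comm A C, dist_comm C B] at hst
    refine mul_left_cancel₀ hw ?_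
    linear_combination -hst
  have ht0 : 0 ≤ t := by linarith
  have hu1 : 1 ≤ u := by nlinarith
  have hv1 : 1 ≤ v := by nlinarith
  have hw1 : 1 ≤ w := by nlinarith
  have tu : t ≤ u := h.ratio_le hABC hij hik hjk (i' := 2) (j' := 0) (k' := 1) (by decide)
    (by decide) (by decide) ht0 hu1 hs
    ((isIsosceles_iff_exists_apex _ _ _).2 (Or.inl hB'dist.symm))
  have tv : t ≤ v := h.ratio_le hABC hij hik hjk (i' := 0) (j' := 1) (k' := 2) (by decide)
    (by decide) (by decide) ht0 hv1 hs
    ((isIsosceles_iff_exists_apex _ _ _).2 (Or.inl hC'dist.symm))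
  have tw : t ≤ w := h.ratio_le hABC hij hik hjk (i' := 0) (j' := 2) (k' := 1) (by decide)
    (by decide) (by decide) ht0 hw1 hs
    ((isIsosceles_iff_exists_apex _ _ _).2 (Or.inr (Or.inl (by
      show dist C _ = dist C A
      rw [dist_comm]; exact hB₁dist))))
  have htri : tri S P R = tri (![A, B, C] i) (![A, B, C] j)
      (![A, B, C] i + t • (![A, B, C] k - ![A, B, C] i)) := by unfold tri; rw [hs]
  rw [htri]
  clear htri hs h hB'ray hC'ray hB₁ray hB'dist hC'dist hB₁dist hABC hB₁ne
  generalize hda : dist B C = a at *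
  generalize hdb : dist C A = b at *
  generalize hdc : dist A B = c at *
  have hda' : dist C B = a := by rw [dist_comm, hda]
  have hdb' : dist A C = b := by rw [dist_comm, hdb]
  have hdc' : dist B A = c := by rw [dist_comm, hdc]
  have hb : 0 < b := by linarith
  have hc : 0 < c := by linarith
  have tua : t * a ≤ b := hu ▸ mul_le_mul_of_nonneg_right tu ha.le
  have tvb : t * b ≤ c := hv ▸ mul_le_mul_of_nonneg_right tv hb.le
  have twc : t * c ^ 2 ≤ b ^ 2 + c ^ 2 - a ^ 2 :=
    hw' ▸ mul_le_mul_of_nonneg_right tw (sq_nonneg c)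
  fin_cases i <;> fin_cases j <;> fin_cases k <;> simp at hij hik hjk <;>
    simp only [Fin.zero_eta, Fin.mk_one, Fin.reduceFinMk, Matrix.cons_val, hda, hdb, hdc, hda', hdb', hdc'] at hiso ⊢
  · obtain rfl : t = v := mul_right_cancel₀ hb.ne' (by
      rw [hv]; exact ratio_eq_of_large_middle ha hab hbc ht tvb hiso)
    exact Or.inr (Or.inl rfl)
  · obtain rfl : t = w := mul_right_cancel₀ (pow_pos hc 2).ne' (by
      rw [hw']; exact ratio_eq_of_middle_large ha hab hbc ht hiso)
    exact Or.inr (Or.inr (tri_swap_right _ _ _).symm)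
  · exact (false_of_large_small ha hab hbc tua tvb twc hiso).elim
  · exact (false_of_small_large ha hab hbc ht hiso).elim
  · obtain rfl : t = u := mul_right_cancel₀ ha.ne' (by
      rw [hu]; exact ratio_eq_of_middle_small ha hab hbc ht tua hiso)
    exact Or.inl (tri_rotate _ _ _).symm
  · exact (false_of_small_middle ha hab hbc ht tvb hiso).elim
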